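/- Let f ∈ ℂ[x_0,…,x_4] be homogeneous of degree n with V = {f = 0} ⊂ ℙ⁴(ℂ) nodal, and let k be a positive integer with 2k < n. Let H be a nonzero linear subspace of the space of homogeneous polynomials of degree k in ℂ[x_0,…,x_4] all of whose members vanish at every point of Sing(V), and suppose that the set {x ∈ V : h(x) = 0 for all h ∈ H} is finite. Then the singular points of V impose independent linear conditions on homogeneous polynomials of degree 2n−5: for every point P ∈ Sing(V) there exists a homogeneous polynomial of degree 2n−5 in ℂ[x_0,…,x_4] vanishing at every point of Sing(V) \ {P} and not vanishing at P. -/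

import Mathlib

open MvPolynomial

noncomputable section

/-- The projective space `ℙ^N(ℂ)`. -/
abbrev ProjPt (N : ℕ) := Projectivization ℂ (Fin (N + 1) → ℂ)

/-- A (homogeneous) polynomial vanishes at a point of projective space. -/
def VanishesAt {N : ℕ} (F : MvPolynomial (Fin (N + 1)) ℂ) (p : ProjPt N) : Prop :=
  eval p.rep F = 0

/-- The singular locus of the hypersurface `{f = 0} ⊂ ℙ⁴(ℂ)`: points where `f` and all
partial derivatives of `f` vanish. -/
def SingHyp (f : MvPolynomial (Fin 5) ℂ) : Set (ProjPt 4) :=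
  {p : ProjPt 4 | eval p.rep f = 0 ∧ ∀ j : Fin 5, eval p.rep (pderiv j f) = 0}

/-- The Hessian matrix of `f` evaluated at a vector `v`. -/
def HessianAt (f : MvPolynomial (Fin 5) ℂ) (v : Fin 5 → ℂ) : Matrix (Fin 5) (Fin 5) ℂ :=
  Matrix.of fun i j : Fin 5 => eval v (pderiv i (pderiv j f))

/-!
Let `h₁, …, hₛ` be generic members of `H` and `l` a generic linear form, so that `f, h₁, …, hₛ, l`
is a regular sequence. The quotient by it is Artinian with a one-dimensional socle, in degree
`t = n - 1 + s (k - 1)`: exchange the variables one at a time for the members of the sequence.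

A linear relation between the evaluations of forms of degree `d` at the singular points, with
`t ≤ d + k`, would by duality modulo `f, h₁, …, hₛ` and a large power of `l` yield a form
`q ∉ (f, h₁, …, hₛ)` of degree less than `k` such that `q * g ∈ (f, h₁, …, hₛ)` for every form `g`
of bounded degree vanishing at these points. Take such a `g` with `q * g ≡ ∑ i, xᵢ * hᵢ` modulo `f`.
At a singular point `v` let `z` be a linear form vanishing at `v` and `r` a form that does not
vanish at `v` but at all the other points, so that also `q * r * z ∈ (f, h₁, …, hₛ)`. Eliminating
`hᵢ` from these two relations gives `r * xᵢ * z - w * g ∈ (f, hⱼ : j ≠ i)` for some `w`. Compare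
gradients at `v`, where that of `f` vanishes: unless `xᵢ` vanishes at `v`, the gradient of every
such `z` lies in the span of the `s` gradients of `g` and `hⱼ`, which is too small. Hence the `xᵢ`
satisfy the same hypotheses as `g` in smaller degree, and by induction `f` divides every `q * xᵢ`,
so `q ^ 2 * g`. The singular locus is finite, so `f` is squarefree and divides `q * g`. For `g = hᵢ`
regularity gives `q ∈ (f, hⱼ : j ≠ i)`, a contradiction.
-/

open RingTheory.Sequence Pointwise

attribute [local instance] MvPolynomial.gradedAlgebra

section Colon

variable {R : Type*} [CommRing R] {I J : Ideal R} {c z : R}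

lemma isSMulRegular_quotient_iff {x : R} :
    IsSMulRegular (R ⧸ I) x ↔ ∀ u, x * u ∈ I → u ∈ I :=
  isSMulRegular_quotient_iff_mem_of_smul_mem I x

lemma isSMulRegular_quotient_congr {a b : R} (ha : IsSMulRegular (R ⧸ I) a) (hab : a - b ∈ I) :
    IsSMulRegular (R ⧸ I) b := by
  refine isSMulRegular_quotient_iff.2 fun u hu => isSMulRegular_quotient_iff.1 ha u ?_
  have : a * u = (a - b) * u + b * u := by ring
  exact this ▸ I.add_mem (I.mul_mem_right _ hab) hu

lemma sup_span_singleton_congr {a b : R} (h : a - b ∈ I) :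
    I ⊔ Ideal.span {a} = I ⊔ Ideal.span {b} := by
  have hle {a b : R} (h : a - b ∈ I) : I ⊔ Ideal.span {a} ≤ I ⊔ Ideal.span {b} := by
    refine sup_le le_sup_left ((Ideal.span_singleton_le_iff_mem _).2 ?_)
    rw [← sub_add_cancel a b]
    exact Submodule.add_mem_sup h (Ideal.mem_span_singleton_self b)
  exact le_antisymm (hle h) (hle (by simpa using I.neg_mem h))

lemma mem_sup_span_singleton_mul : z ∈ I ⊔ Ideal.span {c} * J ↔ ∃ w ∈ J, z - c * w ∈ I := by
  rw [Submodule.mem_sup]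
  constructor
  · rintro ⟨y, hy, _, hcw, rfl⟩
    obtain ⟨w, hw, rfl⟩ := Ideal.mem_span_singleton_mul.1 hcw
    exact ⟨w, hw, by simpa using hy⟩
  · rintro ⟨w, hw, h⟩
    exact ⟨_, h, c * w, Ideal.mem_span_singleton_mul.2 ⟨w, hw, rfl⟩, by ring⟩

lemma mul_mem_sup_span_singleton_mul_iff (hc : IsSMulRegular (R ⧸ I) c) :
    c * z ∈ I ⊔ Ideal.span {c} * J ↔ z ∈ I ⊔ J := by
  rw [mem_sup_span_singleton_mul, sup_comm, Submodule.mem_sup]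
  constructor
  · rintro ⟨w, hw, h⟩
    exact ⟨w, hw, z - w, isSMulRegular_quotient_iff.1 hc _ (by rwa [mul_sub]), by ring⟩
  · rintro ⟨w, hw, y, hy, rfl⟩
    exact ⟨w, hw, by simpa [mul_add] using I.mul_mem_left c hy⟩

lemma colon_sup_span_singleton_mul {F : R} {M : Ideal R} (hc : IsSMulRegular (R ⧸ I) c)
    (hF : IsSMulRegular (R ⧸ I) F) (hFM : F ∈ M) :
    (I ⊔ Ideal.span {c} * Ideal.span {F}).colon M =
      I ⊔ Ideal.span {c} * (I ⊔ Ideal.span {F}).colon M := by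
  ext u
  simp only [mem_sup_span_singleton_mul, Submodule.mem_colon, smul_eq_mul, SetLike.mem_coe]
  constructor
  · intro hu
    obtain ⟨_, hFw, hw⟩ := hu F hFM
    obtain ⟨w, rfl⟩ := Ideal.mem_span_singleton.1 hFw
    have huw : u - c * w ∈ I := by
      refine isSMulRegular_quotient_iff.1 hF _ ?_
      convert hw using 1
      ring
    refine ⟨w, fun x hx => (mul_mem_sup_span_singleton_mul_iff hc).1 ?_, huw⟩
    have h := sub_mem (mem_sup_span_singleton_mul.2 (hu x hx))
      (Ideal.mem_sup_left (I.mul_mem_right x huw))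
    convert h using 1
    ring
  · rintro ⟨w, hw, huw⟩ x hx
    rw [← mem_sup_span_singleton_mul]
    have h := add_mem (Ideal.mem_sup_left (I.mul_mem_right x huw))
      ((mul_mem_sup_span_singleton_mul_iff hc).2 (hw x hx))
    convert h using 1
    ring

end Colon

section Graded

variable {σ R : Type*} [CommRing R] {b w : MvPolynomial σ R} {e m : ℕ}

lemma homogeneousComponent_mul_of_lt (hb : b.IsHomogeneous e) (h : m < e) :
    homogeneousComponent m (b * w) = 0 :=
  (decomposition.decompose'_apply (b * w) m).symm.trans <|
    DirectSum.coe_decompose_mul_of_left_mem_of_not_le (𝒜 := homogeneousSubmodule σ R) hb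
      (by simpa using h)

lemma homogeneousComponent_add_mul (m : ℕ) (hb : b.IsHomogeneous e) :
    homogeneousComponent (e + m) (b * w) = b * homogeneousComponent m w := by
  have h := DirectSum.coe_decompose_mul_of_left_mem_of_le (𝒜 := homogeneousSubmodule σ R)
    (b := w) hb (Nat.le_add_right e m)
  rw [Nat.add_sub_cancel_left] at h
  exact (decomposition.decompose'_apply (b * w) (e + m)).symm.trans
    (h.trans (congrArg (b * ·) (decomposition.decompose'_apply w m)))

lemma mem_idealOfVars_of_isHomogeneous (hb : b.IsHomogeneous e) (he : 1 ≤ e) :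
    b ∈ idealOfVars σ R := by
  rw [← pow_one (idealOfVars σ R), mem_pow_idealOfVars_iff' 1]
  intro x hx
  by_contra hne
  exact hne (hb.coeff_eq_zero (by lia))

end Graded

section Socle

variable {σ K : Type*} [Field K] {I : Ideal (MvPolynomial σ K)} {c F l : MvPolynomial σ K}
  {D N e t : ℕ}

/-- The socle of the quotient of the polynomial ring by `I`, i.e. the annihilator of the
irrelevant ideal, is generated by the class of one nonzero form of degree `t`. -/
def HasSimpleSocle (I : Ideal (MvPolynomial σ K)) (t : ℕ) : Prop :=
  ∃ s : MvPolynomial σ K, s.IsHomogeneous t ∧ s ∉ I ∧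
    I.colon (idealOfVars σ K) = I ⊔ Ideal.span {s}

lemma HasSimpleSocle.mul_left (hce : c.IsHomogeneous e)
    (hc : IsSMulRegular (MvPolynomial σ K ⧸ I) c)
    (hF : IsSMulRegular (MvPolynomial σ K ⧸ I) F) (hF₀ : F ∈ idealOfVars σ K)
    (h : HasSimpleSocle (I ⊔ Ideal.span {F}) t) :
    HasSimpleSocle (I ⊔ Ideal.span {c * F}) (e + t) := by
  obtain ⟨s, hs, hsI, hcolon⟩ := h
  refine ⟨c * s, hce.mul hs, fun hmem => hsI ?_, ?_⟩
  · rwa [← Ideal.span_singleton_mul_span_singleton, mul_mem_sup_span_singleton_mul_iff hc] at hmem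
  · rw [← Ideal.span_singleton_mul_span_singleton, colon_sup_span_singleton_mul hc hF hF₀, hcolon,
      Ideal.mul_sup, Ideal.mul_sup, ← sup_assoc, ← sup_assoc,
      sup_eq_left.2 (Ideal.mul_le_right : Ideal.span {c} * I ≤ I),
      Ideal.span_singleton_mul_span_singleton c s]

lemma HasSimpleSocle.of_mul_left (hI : I.IsHomogeneous (homogeneousSubmodule σ K))
    (hce : c.IsHomogeneous e) (hc : IsSMulRegular (MvPolynomial σ K ⧸ I) c)
    (hF : IsSMulRegular (MvPolynomial σ K ⧸ I) F) (hF₀ : F ∈ idealOfVars σ K)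
    (h : HasSimpleSocle (I ⊔ Ideal.span {c * F}) t) :
    ∃ t', t = e + t' ∧ HasSimpleSocle (I ⊔ Ideal.span {F}) t' := by
  obtain ⟨s, hs, hsI, hcolon⟩ := h
  rw [← Ideal.span_singleton_mul_span_singleton] at hsI hcolon
  have hscolon : s ∈ (I ⊔ Ideal.span {c} * Ideal.span {F}).colon (idealOfVars σ K) :=
    hcolon ▸ Ideal.mem_sup_right (Ideal.mem_span_singleton_self s)
  obtain ⟨w₀, -, hw₀⟩ := mem_sup_span_singleton_mul.1
    (colon_sup_span_singleton_mul hc hF hF₀ ▸ hscolon)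
  have hcomp := homogeneousComponent_mem_of_mem hI hw₀ t
  rw [map_sub, homogeneousComponent_eq_self hs] at hcomp
  obtain ⟨t', rfl⟩ : ∃ t', t = e + t' := by
    refine Nat.exists_eq_add_of_le (not_lt.1 fun hlt => hsI ?_)
    rw [homogeneousComponent_mul_of_lt hce hlt, sub_zero] at hcomp
    exact Ideal.mem_sup_left hcomp
  rw [homogeneousComponent_add_mul t' hce] at hcomp
  set w := homogeneousComponent t' w₀
  have hsw (J : Ideal (MvPolynomial σ K)) : s ∈ I ⊔ Ideal.span {c} * J ↔ w ∈ I ⊔ J := by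
    rw [← mul_mem_sup_span_singleton_mul_iff (J := J) hc]
    nth_rw 1 [← sub_add_cancel s (c * w)]
    exact (I ⊔ Ideal.span {c} * J).add_mem_iff_right (Ideal.mem_sup_left hcomp)
  rw [colon_sup_span_singleton_mul hc hF hF₀] at hcolon hscolon
  refine ⟨t', rfl, w, homogeneousComponent_isHomogeneous _ _, fun h => hsI ((hsw _).2 h),
    le_antisymm (fun v hv => ?_) (sup_le Ideal.le_colon ?_)⟩
  · have hle : I ⊔ Ideal.span {c} * Ideal.span {F} ⊔ Ideal.span {s} ≤
        I ⊔ Ideal.span {c} * (Ideal.span {F} ⊔ Ideal.span {w}) :=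
      sup_le (sup_le_sup_left (Ideal.mul_mono_right le_sup_left) _)
        ((Ideal.span_singleton_le_iff_mem _).2 ((hsw _).2
          (Ideal.mem_sup_right (Ideal.mem_sup_right (Ideal.mem_span_singleton_self w)))))
    rw [sup_assoc, ← mul_mem_sup_span_singleton_mul_iff hc]
    exact hle (hcolon ▸ (mul_mem_sup_span_singleton_mul_iff hc).2 (Ideal.mem_sup_right hv))
  · have hle : I ≤ (I ⊔ Ideal.span {F}).colon (idealOfVars σ K) := le_sup_left.trans Ideal.le_colon
    exact (Ideal.span_singleton_le_iff_mem _).2 (sup_eq_right.2 hle ▸ (hsw _).1 hscolon)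

/-- Exchanging a linear form `l` for a form `F` of degree `D`: modulo `I ⊔ (F)` some power of `l` is
a multiple `c * F`, so the socle climbs from `I ⊔ (l)` to `I ⊔ (l ^ M) = I ⊔ (c * F)` and then
descends to `I ⊔ (F)`. -/
lemma HasSimpleSocle.exchange (hI : I.IsHomogeneous (homogeneousSubmodule σ K))
    (hl : l.IsHomogeneous 1) (hF : F.IsHomogeneous D) (hD : 1 ≤ D)
    (hlreg : IsSMulRegular (MvPolynomial σ K ⧸ I) l) (hN : l ^ N ∈ I ⊔ Ideal.span {F})
    (h : HasSimpleSocle (I ⊔ Ideal.span {l}) t) :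
    IsSMulRegular (MvPolynomial σ K ⧸ I) F ∧ HasSimpleSocle (I ⊔ Ideal.span {F}) (t + (D - 1)) := by
  have hlpow (r : ℕ) : (l ^ r).IsHomogeneous r := by simpa using hl.pow r
  obtain ⟨c, hce, hcF⟩ : ∃ c : MvPolynomial σ K, c.IsHomogeneous N ∧ l ^ (D + N) - F * c ∈ I := by
    have hmem : l ^ (D + N) ∈ I ⊔ Ideal.span {F} * ⊤ := by
      rw [Ideal.mul_top, pow_add]
      exact Ideal.mul_mem_left _ _ hN
    obtain ⟨c₀, -, hc₀⟩ := mem_sup_span_singleton_mul.1 hmem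
    have hcomp := homogeneousComponent_mem_of_mem hI hc₀ (D + N)
    rw [map_sub, homogeneousComponent_eq_self (hlpow _), homogeneousComponent_add_mul N hF] at hcomp
    exact ⟨_, homogeneousComponent_isHomogeneous _ _, hcomp⟩
  obtain ⟨hFreg, hcreg⟩ := IsSMulRegular.mul_iff.1
    (isSMulRegular_quotient_congr (hlreg.pow (D + N)) hcF)
  have hup := h.mul_left (hlpow (D + N - 1)) (hlreg.pow _) hlreg
    (mem_idealOfVars_of_isHomogeneous hl le_rfl)
  have hsup : I ⊔ Ideal.span {l ^ (D + N - 1) * l} = I ⊔ Ideal.span {c * F} := by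
    rw [← pow_succ, Nat.sub_add_cancel (by lia), mul_comm c]
    exact sup_span_singleton_congr hcF
  obtain ⟨t', ht', hs⟩ := (hsup ▸ hup).of_mul_left hI hce hcreg hFreg
    (mem_idealOfVars_of_isHomogeneous hF hD)
  exact ⟨hFreg, by convert hs using 1; lia⟩

end Socle

lemma isWeaklyRegular_append_singleton_iff {R : Type*} [CommRing R] {rs : List R} {a : R} :
    IsWeaklyRegular R (rs ++ [a]) ↔
      IsWeaklyRegular R rs ∧ IsSMulRegular (R ⧸ Ideal.ofList rs) a := by
  rw [isWeaklyRegular_append_iff, isWeaklyRegular_singleton_iff, smul_eq_mul, Ideal.mul_top]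

lemma ofList_perm {R : Type*} [CommRing R] {rs rs' : List R} (h : rs.Perm rs') :
    Ideal.ofList rs = Ideal.ofList rs' :=
  congrArg Ideal.span (Set.ext fun _ => h.mem_iff)

section PositiveForm

variable {σ R : Type*} [CommRing R]

/-- A form of positive degree; the zero polynomial is one. -/
def IsPositiveForm (x : MvPolynomial σ R) : Prop :=
  ∃ e, 1 ≤ e ∧ x.IsHomogeneous e

lemma isHomogeneous_ofList {rs : List (MvPolynomial σ R)} (h : ∀ r ∈ rs, IsPositiveForm r) :
    (Ideal.ofList rs).IsHomogeneous (homogeneousSubmodule σ R) :=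
  Ideal.homogeneous_span _ _ fun r hr => (h r hr).imp fun _ he => he.2

/-- Graded Nakayama lemma: an element of `N` is divisible by every power of `a` modulo `I`. -/
lemma eq_bot_of_eq_positiveForm_smul {I : Ideal (MvPolynomial σ R)}
    (hI : I.IsHomogeneous (homogeneousSubmodule σ R)) {a : MvPolynomial σ R}
    (ha : IsPositiveForm a) {N : Submodule (MvPolynomial σ R) (MvPolynomial σ R ⧸ I)}
    (hN : N = a • N) : N = ⊥ := by
  obtain ⟨e, he, ha⟩ := ha
  have hpow (r : ℕ) : N = a ^ r • N := by
    induction r with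
    | zero => simp
    | succ r ih => rw [pow_succ', mul_smul, ← ih, ← hN]
  refine (Submodule.eq_bot_iff N).2 fun x hx => ?_
  obtain ⟨u, rfl⟩ := Ideal.Quotient.mk_surjective x
  refine Ideal.Quotient.eq_zero_iff_mem.2 ((mem_iff_homogeneousComponent_mem hI u).2 fun m => ?_)
  rw [hpow (m + 1)] at hx
  obtain ⟨y, -, hy⟩ := (Submodule.mem_smul_pointwise_iff_exists _ _ _).1 hx
  obtain ⟨w, rfl⟩ := Ideal.Quotient.mk_surjective y
  have h := homogeneousComponent_mem_of_mem hI (Ideal.Quotient.eq.1 hy) m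
  rw [map_sub] at h
  change homogeneousComponent m (a ^ (m + 1) * w) - _ ∈ I at h
  rw [homogeneousComponent_mul_of_lt (ha.pow (m + 1)) (by nlinarith), zero_sub] at h
  exact (Ideal.neg_mem_iff I).1 h

lemma isWeaklyRegular_of_perm_of_isPositiveForm {rs rs' : List (MvPolynomial σ R)}
    (h : IsWeaklyRegular (MvPolynomial σ R) rs) (hrs : ∀ r ∈ rs, IsPositiveForm r)
    (hperm : rs.Perm rs') : IsWeaklyRegular (MvPolynomial σ R) rs' := by
  refine h.prototype_perm hperm fun a b rs₀ hsub => ?_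
  have hpos : ∀ r ∈ a :: b :: rs₀, IsPositiveForm r := fun r hr => hrs r (hsub.subset hr)
  rw [smul_eq_mul, Ideal.mul_top]
  exact eq_bot_of_eq_positiveForm_smul
    (isHomogeneous_ofList fun r hr => hpos r (by simp [hr])) (hpos a (by simp))

end PositiveForm

section CompleteIntersection

variable {σ K : Type*} [Field K] {rs rs' Ls Bs : List (MvPolynomial σ K)}
  {l F : MvPolynomial σ K} {ds : List ℕ} {D t : ℕ}

/-- A regular sequence of forms of positive degree whose quotient ring has a simple socle, in degree
`t`; this is the case for complete intersections of dimension zero. -/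
structure IsSocleSequence (rs : List (MvPolynomial σ K)) (t : ℕ) : Prop where
  isPositiveForm : ∀ r ∈ rs, IsPositiveForm r
  isWeaklyRegular : IsWeaklyRegular (MvPolynomial σ K) rs
  hasSimpleSocle : HasSimpleSocle (Ideal.ofList rs) t

namespace IsSocleSequence

lemma perm (h : IsSocleSequence rs t) (hperm : rs.Perm rs') : IsSocleSequence rs' t where
  isPositiveForm r hr := h.isPositiveForm r (hperm.mem_iff.2 hr)
  isWeaklyRegular :=
    isWeaklyRegular_of_perm_of_isPositiveForm h.isWeaklyRegular h.isPositiveForm hperm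
  hasSimpleSocle := ofList_perm hperm ▸ h.hasSimpleSocle

lemma exchange (h : IsSocleSequence (rs ++ [l]) t) (hl : l.IsHomogeneous 1)
    (hD : 1 ≤ D) (hF : F.IsHomogeneous D) (hrad : l ∈ (Ideal.ofList (rs ++ [F])).radical) :
    IsSocleSequence (rs ++ [F]) (t + (D - 1)) := by
  have hpos : ∀ r ∈ rs, IsPositiveForm r := fun r hr => h.isPositiveForm r (by simp [hr])
  obtain ⟨hreg, hlreg⟩ := isWeaklyRegular_append_singleton_iff.1 h.isWeaklyRegular
  obtain ⟨N, hN⟩ := hrad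
  have hsoc := h.hasSimpleSocle
  rw [Ideal.ofList_append, Ideal.ofList_singleton] at hN hsoc
  obtain ⟨hFreg, hFsoc⟩ := hsoc.exchange (isHomogeneous_ofList hpos) hl hF hD hlreg hN
  refine ⟨?_, isWeaklyRegular_append_singleton_iff.2 ⟨hreg, hFreg⟩, ?_⟩
  · simpa [or_imp, forall_and] using And.intro hpos ⟨D, hD, hF⟩
  · rwa [Ideal.ofList_append, Ideal.ofList_singleton]

lemma exchange_all (hBs : List.Forall₂ (fun b d => 1 ≤ d ∧ b.IsHomogeneous d) Bs ds)
    (h : IsSocleSequence (rs ++ Ls) t) (hLs : ∀ l ∈ Ls, l.IsHomogeneous 1)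
    (hlen : Ls.length = Bs.length)
    (hrad : ∀ i ≤ Bs.length,
      idealOfVars σ K ≤ (Ideal.ofList (rs ++ (Bs.take i ++ Ls.drop i))).radical) :
    IsSocleSequence (rs ++ Bs) (t + (ds.map (· - 1)).sum) := by
  induction hBs generalizing rs Ls t with
  | nil => simpa [List.length_eq_zero_iff.1 hlen] using h
  | @cons b d Bs ds hb _ ih =>
    obtain - | ⟨l, Ls⟩ := Ls
    · simp at hlen
    have hl : l.IsHomogeneous 1 := hLs l (by simp)
    have hmid (x : MvPolynomial σ K) : (rs ++ x :: Ls).Perm (rs ++ Ls ++ [x]) :=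
      List.perm_middle.trans (List.perm_append_singleton x (rs ++ Ls)).symm
    have hfirst : IsSocleSequence (rs ++ Ls ++ [b]) (t + (d - 1)) :=
      (h.perm (hmid l)).exchange hl hb.1 hb.2
        (ofList_perm (hmid b) ▸ hrad 1 (by simp) (mem_idealOfVars_of_isHomogeneous hl le_rfl))
    have hnext : IsSocleSequence (rs ++ [b] ++ Ls) (t + (d - 1)) :=
      hfirst.perm (by simpa using (hmid b).symm)
    have h' := ih hnext (fun x hx => hLs x (by simp [hx])) (by simpa using hlen)
      fun i hi => by simpa using hrad (i + 1) (by simpa using hi)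
    simpa [add_assoc] using h'

end IsSocleSequence

end CompleteIntersection

section Variables

variable {σ R : Type*} [CommRing R]

lemma isWeaklyRegular_map_X {is : List σ} (his : is.Nodup) :
    IsWeaklyRegular (MvPolynomial σ R) (is.map fun i => (X i : MvPolynomial σ R)) := by
  induction is using List.reverseRecOn with
  | nil => simp
  | append_singleton is i ih =>
    obtain ⟨his, -, hdisj⟩ := List.nodup_append'.1 his
    have hi : i ∉ is := List.disjoint_singleton.1 hdisj
    rw [List.map_append, List.map_singleton, isWeaklyRegular_append_singleton_iff]
    refine ⟨ih his, isSMulRegular_quotient_iff.2 fun u hu => ?_⟩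
    have hspan : Ideal.ofList (is.map fun i => (X i : MvPolynomial σ R)) =
        Ideal.span (X '' {j | j ∈ is}) := by
      refine congrArg Ideal.span (Set.ext fun x => ?_)
      simp
    rw [hspan, mem_ideal_span_X_image] at hu ⊢
    intro m hm
    obtain ⟨j, hj, hne⟩ := hu (Finsupp.single i 1 + m) (by simpa [coeff_X_mul] using hm)
    have hij : i ≠ j := fun h => hi (h ▸ hj)
    exact ⟨j, hj, by simpa [hij] using hne⟩

lemma ofList_map_X_toList [Fintype σ] :
    Ideal.ofList (Finset.univ.toList.map fun i => (X i : MvPolynomial σ R)) = idealOfVars σ R := by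
  refine congrArg Ideal.span (Set.ext fun x => ?_)
  simp

end Variables

section Base

variable {σ K : Type*} [Field K]

lemma one_notMem_idealOfVars : (1 : MvPolynomial σ K) ∉ idealOfVars σ K := fun h => by
  rw [← pow_one (idealOfVars σ K), mem_pow_idealOfVars_iff' 1] at h
  simpa using h 0 (by simp)

lemma hasSimpleSocle_idealOfVars : HasSimpleSocle (idealOfVars σ K) 0 := by
  refine ⟨1, isHomogeneous_one _ _, one_notMem_idealOfVars, ?_⟩
  rw [Ideal.span_singleton_one, sup_top_eq, Submodule.colon_eq_top_iff_subset]

lemma isSocleSequence_variables [Fintype σ] :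
    IsSocleSequence (Finset.univ.toList.map fun i => (X i : MvPolynomial σ K)) 0 where
  isPositiveForm r hr := by
    obtain ⟨i, -, rfl⟩ := List.mem_map.1 hr
    exact ⟨1, le_rfl, isHomogeneous_X _ _⟩
  isWeaklyRegular := isWeaklyRegular_map_X (Finset.nodup_toList _)
  hasSimpleSocle := ofList_map_X_toList (σ := σ) (R := K) ▸ hasSimpleSocle_idealOfVars

end Base

section Dimension

variable {R : Type*} [CommRing R]

lemma ringKrullDim_quotient_sup_span_singleton_succ_le {I : Ideal R} {a : R}
    (ha : IsSMulRegular (R ⧸ I) a) :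
    ringKrullDim (R ⧸ (I ⊔ Ideal.span {a})) + 1 ≤ ringKrullDim (R ⧸ I) := by
  refine ringKrullDim_succ_le_of_surjective (r := Ideal.Quotient.mk I a)
    (Ideal.Quotient.factor le_sup_left) (Ideal.Quotient.factor_surjective _) ?_ ?_
  · refine mem_nonZeroDivisors_iff_right.2 fun x hx => ha ?_
    simpa [Algebra.smul_def, mul_comm] using hx
  · exact Ideal.Quotient.eq_zero_iff_mem.2 (Ideal.mem_sup_right (Ideal.mem_span_singleton_self a))

lemma ringKrullDim_quotient_ofList_add_length_le {rs : List R} (h : IsWeaklyRegular R rs) :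
    ringKrullDim (R ⧸ Ideal.ofList rs) + rs.length ≤ ringKrullDim R := by
  induction rs using List.reverseRecOn with
  | nil => simpa using ringKrullDim_quotient_le _
  | append_singleton rs a ih =>
    obtain ⟨hrs, ha⟩ := isWeaklyRegular_append_singleton_iff.1 h
    rw [Ideal.ofList_append, Ideal.ofList_singleton, List.length_append, List.length_singleton,
      Nat.cast_add, Nat.cast_one, add_comm (rs.length : WithBot ℕ∞), ← add_assoc]
    exact (add_le_add_left (ringKrullDim_quotient_sup_span_singleton_succ_le ha) _).trans (ih hrs)

lemma ringKrullDim_quotient_le_iff {I : Ideal R} {r : ℕ} :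
    ringKrullDim (R ⧸ I) ≤ r ↔ ∀ p : PrimeSpectrum R, I ≤ p.asIdeal → Order.coheight p ≤ r := by
  have hcoheight (p : PrimeSpectrum.zeroLocus (I : Set R)) :
      Order.coheight p = Order.coheight (p : PrimeSpectrum R) := by
    refine Order.coheight_eq_of_strictMono _ (Subtype.strictMono_coe _) (fun a b hb => ?_) p
    exact ⟨⟨b, fun _ hx => hb.le (a.2 hx)⟩, hb, rfl⟩
  rw [ringKrullDim_quotient, Order.krullDim_eq_iSup_coheight, iSup_le_iff, Subtype.forall]
  refine forall₂_congr fun p hp => ?_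
  rw [hcoheight]
  exact WithBot.coe_le_coe

lemma ringKrullDim_quotient_le_of_forall_prime {I : Ideal R} {r : ℕ}
    (h : ∀ p : Ideal R, p.IsPrime → I ≤ p → ∃ J ≤ p, ringKrullDim (R ⧸ J) ≤ r) :
    ringKrullDim (R ⧸ I) ≤ r := by
  refine ringKrullDim_quotient_le_iff.2 fun p hp => ?_
  obtain ⟨J, hJp, hJ⟩ := h p.asIdeal p.isPrime hp
  exact ringKrullDim_quotient_le_iff.1 hJ p hJp

lemma ringKrullDim_quotient_le_of_le {I J : Ideal R} {r : ℕ} (h : ringKrullDim (R ⧸ I) ≤ r)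
    (hIJ : I ≤ J) : ringKrullDim (R ⧸ J) ≤ r :=
  ringKrullDim_quotient_le_of_forall_prime fun _ _ hJp => ⟨I, hIJ.trans hJp, h⟩

lemma ringKrullDim_quotient_le_of_lt {p q : Ideal R} [p.IsPrime] [q.IsPrime] {r : ℕ}
    (h : ringKrullDim (R ⧸ p) ≤ (r + 1 : ℕ)) (hpq : p < q) : ringKrullDim (R ⧸ q) ≤ r := by
  refine ringKrullDim_quotient_le_iff.2 fun q' hq' => ?_
  have hp := ringKrullDim_quotient_le_iff.1 h ⟨p, inferInstance⟩ le_rfl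
  have hlt : (⟨p, inferInstance⟩ : PrimeSpectrum R) < q' := hpq.trans_le hq'
  exact (ENat.add_le_add_iff_right ENat.one_ne_top).1 ((Order.coheight_add_one_le hlt).trans hp)

end Dimension

section Avoidance

variable {K R ι : Type*} [Field K] [Infinite K] [CommRing R] [Algebra K R] {W : Submodule K R}

lemma exists_mem_forall_notMem_of_finite {B : Set (Ideal R)} (hB : B.Finite)
    (hW : ∀ q ∈ B, ¬ (W : Set R) ⊆ q) : ∃ w ∈ W, ∀ q ∈ B, w ∉ q := by
  by_contra! hcon
  have : Finite B := hB
  obtain ⟨⟨q, hq⟩, hqtop⟩ := Subspace.exists_eq_top_of_iUnion_eq_univ (k := K) (E := W) (ι := B)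
    (p := fun q => (q.1.restrictScalars K).comap W.subtype) <| by
      refine Set.eq_univ_of_forall fun w => Set.mem_iUnion.2 ?_
      obtain ⟨q, hq, hwq⟩ := hcon w w.2
      exact ⟨⟨q, hq⟩, hwq⟩
  refine hW q hq fun w hw => ?_
  have hmem : (⟨w, hw⟩ : W) ∈ (q.restrictScalars K).comap W.subtype := hqtop ▸ Submodule.mem_top
  exact hmem

variable [IsNoetherianRing R] [Finite ι] {I : ι → Ideal R} {r : ι → ℕ}

/-- It suffices that `w` avoids those minimal primes of the `I i` that do not contain `W`. -/
lemma exists_mem_forall_ringKrullDim_le (hI : ∀ i, ringKrullDim (R ⧸ I i) ≤ (r i + 1 : ℕ))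
    (hW : ∀ i, ringKrullDim (R ⧸ (I i ⊔ Ideal.span W)) ≤ r i) :
    ∃ w ∈ W, ∀ i, ringKrullDim (R ⧸ (I i ⊔ Ideal.span {w})) ≤ r i := by
  obtain ⟨w, hwW, hw⟩ := exists_mem_forall_notMem_of_finite (W := W)
    (B := ⋃ i, {q | q ∈ (I i).minimalPrimes ∧ ¬ (W : Set R) ⊆ q})
    (Set.finite_iUnion fun i =>
      (Ideal.finite_minimalPrimes_of_isNoetherianRing R (I i)).subset fun _ hq => hq.1)
    fun _ hq => (Set.mem_iUnion.1 hq).elim fun _ h => h.2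
  refine ⟨w, hwW, fun i => ringKrullDim_quotient_le_of_forall_prime fun p hp hle => ?_⟩
  obtain ⟨hIp, hwp⟩ := sup_le_iff.1 hle
  obtain ⟨q, hq, hqp⟩ := Ideal.exists_minimalPrimes_le hIp
  have hqprime : q.IsPrime := hq.1.1
  by_cases hWq : (W : Set R) ⊆ q
  · exact ⟨_, (sup_le hq.1.2 (Ideal.span_le.2 hWq)).trans hqp, hW i⟩
  · have hwq : w ∉ q := hw q (Set.mem_iUnion.2 ⟨i, hq, hWq⟩)
    refine ⟨p, le_rfl, ringKrullDim_quotient_le_of_lt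
      (ringKrullDim_quotient_le_of_le (hI i) hq.1.2) (lt_of_le_of_ne hqp ?_)⟩
    rintro rfl
    exact hwq ((Ideal.span_singleton_le_iff_mem _).1 hwp)

lemma exists_list_forall_ringKrullDim_le (s : ℕ) {c : ℕ}
    (hI : ∀ i, ringKrullDim (R ⧸ I i) ≤ r i)
    (hW : ∀ i, ringKrullDim (R ⧸ (I i ⊔ Ideal.span W)) ≤ c) :
    ∃ ws : List R, ws.length = s ∧ (∀ w ∈ ws, w ∈ W) ∧
      ∀ i j, ringKrullDim (R ⧸ (I i ⊔ Ideal.ofList (ws.drop j))) ≤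
        (max (r i - (s - j)) c : ℕ) := by
  induction s with
  | zero =>
    refine ⟨[], rfl, by simp, fun i j => ?_⟩
    rw [List.drop_nil, Ideal.ofList_nil, sup_bot_eq]
    exact (hI i).trans (Nat.cast_le.2 (by lia))
  | succ s ih =>
    obtain ⟨ws, hlen, hws, hdim⟩ := ih
    obtain ⟨w, hw, hwdim⟩ := exists_mem_forall_ringKrullDim_le (W := W)
      (I := fun i => I i ⊔ Ideal.ofList ws) (r := fun i => max (r i - (s + 1)) c)
      (fun i => (hdim i 0).trans (Nat.cast_le.2 (by lia)))
      fun i => (ringKrullDim_quotient_le_of_le (hW i) (sup_le_sup_right le_sup_left _)).trans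
        (Nat.cast_le.2 (le_max_right _ _))
    refine ⟨w :: ws, by simp [hlen], by simpa using ⟨hw, hws⟩, fun i j => ?_⟩
    obtain - | j := j
    · rw [List.drop_zero, Ideal.ofList_cons, sup_comm (Ideal.span {w}), ← sup_assoc]
      exact hwdim i
    · rw [List.drop_succ_cons, Nat.add_sub_add_right]
      exact hdim i j

end Avoidance

section GradedDimension

variable {σ K : Type*} [Field K] {I : Ideal (MvPolynomial σ K)}

lemma mem_idealOfVars_iff {x : MvPolynomial σ K} :
    x ∈ idealOfVars σ K ↔ constantCoeff x = 0 := by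
  rw [← pow_one (idealOfVars σ K), mem_pow_idealOfVars_iff' 1]
  refine ⟨fun h => h 0 (by simp), fun h d hd => ?_⟩
  rwa [Finsupp.degree_eq_zero_iff d |>.1 (by lia)]

instance isMaximal_idealOfVars : (idealOfVars σ K).IsMaximal := by
  have hker : idealOfVars σ K = RingHom.ker (constantCoeff (σ := σ) (R := K)) :=
    Ideal.ext fun _ => mem_idealOfVars_iff
  rw [hker]
  exact RingHom.ker_isMaximal_of_surjective _ fun c => ⟨C c, constantCoeff_C _ _⟩

lemma le_idealOfVars_of_isHomogeneous (hI : I.IsHomogeneous (homogeneousSubmodule σ K))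
    (hne : I ≠ ⊤) : I ≤ idealOfVars σ K := by
  intro x hx
  by_contra hx₀
  have hC := homogeneousComponent_mem_of_mem hI hx 0
  rw [homogeneousComponent_zero] at hC
  refine hne (Ideal.eq_top_of_isUnit_mem _ hC (IsUnit.map C (IsUnit.mk0 _ ?_)))
  exact fun h => hx₀ (mem_idealOfVars_iff.2 h)

/-- The homogeneous core of a prime containing `I` is a prime containing `I`, hence maximal. -/
lemma idealOfVars_le_radical (hI : I.IsHomogeneous (homogeneousSubmodule σ K))
    (hdim : ringKrullDim (MvPolynomial σ K ⧸ I) ≤ (0 : ℕ)) : idealOfVars σ K ≤ I.radical := by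
  rw [Ideal.radical_eq_sInf]
  refine le_sInf fun p ⟨hIp, hp⟩ => ?_
  set q := (p.homogeneousCore (homogeneousSubmodule σ K)).toIdeal
  have hqp : q ≤ p := Ideal.toIdeal_homogeneousCore_le _ p
  have hqprime : q.IsPrime := hp.homogeneousCore
  have hIq : I ≤ q := by
    rw [← hI.toIdeal_homogeneousCore_eq_self]
    exact Ideal.homogeneousCore_mono _ hIp
  have hqmax : q.IsMaximal := by
    have h := ringKrullDim_quotient_le_iff.1 hdim ⟨q, hqprime⟩ hIq
    rwa [Nat.cast_zero, nonpos_iff_eq_zero, Order.coheight_eq_zero, PrimeSpectrum.isMax_iff] at h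
  have hqm := hqmax.eq_of_le isMaximal_idealOfVars.ne_top
    (le_idealOfVars_of_isHomogeneous (HomogeneousIdeal.isHomogeneous _) hqprime.ne_top)
  exact hqm ▸ hqp

end GradedDimension

section Line

lemma aeval_const_mul_of_isHomogeneous {σ R A : Type*} [CommSemiring R] [CommSemiring A]
    [Algebra R A] {g : MvPolynomial σ R} {d : ℕ} (hg : g.IsHomogeneous d) (c : A) (x : σ → A) :
    aeval (fun i => c * x i) g = c ^ d * aeval x g := by
  simp only [aeval_def, eval₂_eq, Finset.mul_sum]
  refine Finset.sum_congr rfl fun m hm => ?_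
  simp only [mul_pow, Finset.prod_mul_distrib, Finset.prod_pow_eq_pow_sum]
  rw [hg.degree_eq_sum_deg_support hm]
  ring

lemma eval_smul_of_isHomogeneous {σ R : Type*} [CommSemiring R] {g : MvPolynomial σ R} {d : ℕ}
    (hg : g.IsHomogeneous d) (c : R) (v : σ → R) : eval (c • v) g = c ^ d * eval v g := by
  simpa only [coe_aeval_eq_eval] using! aeval_const_mul_of_isHomogeneous hg c v

variable {σ K : Type*} [Field K] {v : σ → K}

/-- Restriction of polynomials to the line through the origin spanned by `v`. -/
def lineRestriction (v : σ → K) : MvPolynomial σ K →ₐ[K] Polynomial K :=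
  aeval fun i => Polynomial.X * Polynomial.C (v i)

lemma lineRestriction_of_isHomogeneous {g : MvPolynomial σ K} {d : ℕ} (hg : g.IsHomogeneous d) :
    lineRestriction v g = Polynomial.X ^ d * Polynomial.C (eval v g) := by
  rw [lineRestriction, aeval_const_mul_of_isHomogeneous hg, ← coe_aeval_eq_eval]
  exact congrArg _ (aeval_algebraMap_apply (Polynomial K) v g)

lemma polynomial_eval_lineRestriction (c : K) (v : σ → K) (g : MvPolynomial σ K) :
    (lineRestriction v g).eval c = eval (c • v) g := by
  have hcomp : (Polynomial.aeval c).comp (lineRestriction v) = aeval (c • v) := by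
    ext i
    simp [lineRestriction, mul_comm (v i)]
  simpa [Polynomial.coe_aeval_eq_eval] using! DFunLike.congr_fun hcomp g

lemma lineRestriction_surjective (hv : v ≠ 0) : Function.Surjective (lineRestriction v) := by
  obtain ⟨i, hi⟩ := Function.ne_iff.1 hv
  have hcomp : (lineRestriction v).comp (Polynomial.aeval (C (v i)⁻¹ * X i)) =
      AlgHom.id K (Polynomial K) := by
    ext : 1
    simp only [AlgHom.comp_apply, Polynomial.aeval_X, map_mul, lineRestriction, algHom_C, aeval_X,
      AlgHom.id_apply, Polynomial.algebraMap_eq]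
    rw [mul_left_comm, ← Polynomial.C_mul, inv_mul_cancel₀ hi, Polynomial.C_1, mul_one]
  exact fun g => ⟨_, DFunLike.congr_fun hcomp g⟩

/-- The homogeneous prime ideal of the point `[v]` of projective space. -/
def lineIdeal (v : σ → K) : Ideal (MvPolynomial σ K) :=
  RingHom.ker (lineRestriction v)

lemma mem_lineIdeal_iff {g : MvPolynomial σ K} {d : ℕ} (hg : g.IsHomogeneous d) :
    g ∈ lineIdeal v ↔ eval v g = 0 := by
  rw [lineIdeal, RingHom.mem_ker, lineRestriction_of_isHomogeneous hg]
  simp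

lemma ringKrullDim_quotient_lineIdeal_le (hv : v ≠ 0) :
    ringKrullDim (MvPolynomial σ K ⧸ lineIdeal v) ≤ (1 : ℕ) := by
  rw [ringKrullDim_eq_of_ringEquiv (R := MvPolynomial σ K ⧸ lineIdeal v)
    (Ideal.quotientKerAlgEquivOfSurjective (lineRestriction_surjective hv)).toRingEquiv]
  exact (IsPrincipalIdealRing.ringKrullDim_eq_one _ (Polynomial.not_isField K)).le

end Line

section ProjectiveZeros

variable {σ K : Type*} [Field K]

lemma eval_rep_mk_eq_zero_iff {g : MvPolynomial σ K} {d : ℕ} (hg : g.IsHomogeneous d)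
    {v : σ → K} (hv : v ≠ 0) :
    eval (Projectivization.mk K v hv).rep g = 0 ↔ eval v g = 0 := by
  obtain ⟨c, hc⟩ := Projectivization.exists_smul_eq_mk_rep K v hv
  rw [← hc, Units.smul_def, eval_smul_of_isHomogeneous hg]
  simp

lemma eval_smul_eq_zero_of_mem_lineIdeal {g : MvPolynomial σ K} {v : σ → K}
    (hg : g ∈ lineIdeal v) (c : K) : eval (c • v) g = 0 := by
  rw [← polynomial_eval_lineRestriction, RingHom.mem_ker.1 hg, Polynomial.eval_zero]

lemma lineIdeal_le_idealOfVars (v : σ → K) : lineIdeal v ≤ idealOfVars σ K := fun g hg => by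
  have h := eval_smul_eq_zero_of_mem_lineIdeal hg 0
  rwa [zero_smul, eval_zero, ← mem_idealOfVars_iff] at h

variable [IsAlgClosed K] [Finite σ] [Nonempty σ] {I : Ideal (MvPolynomial σ K)}
  {A : Set (Projectivization K (σ → K))}

lemma exists_lineIdeal_le (hA : A.Finite)
    (hI : ∀ v (hv : v ≠ 0), (∀ g ∈ I, eval v g = 0) → Projectivization.mk K v hv ∈ A)
    {p : Ideal (MvPolynomial σ K)} [p.IsPrime] (hp : I ≤ p) : ∃ v ≠ 0, lineIdeal v ≤ p := by
  have hcover : idealOfVars σ K ⊓ hA.toFinset.inf (fun P => lineIdeal P.rep) ≤ p := by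
    refine le_trans (fun g hg => ?_) (Ideal.IsPrime.radical_le_iff ‹_› |>.2 hp)
    obtain ⟨hg₀, hgA⟩ := Submodule.mem_inf.1 hg
    rw [Submodule.mem_finsetInf] at hgA
    rw [← vanishingIdeal_zeroLocus_eq_radical (K := K), mem_vanishingIdeal_iff]
    intro v hvI
    obtain rfl | hv := eq_or_ne v 0
    · exact (DFunLike.congr_fun eval_zero g).trans (mem_idealOfVars_iff.1 hg₀)
    · have hmk := hI v hv fun g hg => mem_zeroLocus_iff.1 hvI g hg
      obtain ⟨c, hc⟩ := Projectivization.exists_smul_eq_mk_rep K v hv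
      have h := eval_smul_eq_zero_of_mem_lineIdeal (hgA _ (hA.mem_toFinset.2 hmk)) (c⁻¹ : Kˣ)
      rwa [← Units.smul_def, ← hc, inv_smul_smul] at h
  rcases (Ideal.IsPrime.inf_le ‹_›).1 hcover with hp₀ | hpA
  · exact ⟨fun _ => 1, one_ne_zero, (lineIdeal_le_idealOfVars _).trans hp₀⟩
  · obtain ⟨P, -, hP⟩ := (Ideal.IsPrime.inf_le' ‹_›).1 hpA
    exact ⟨P.rep, P.rep_nonzero, hP⟩

lemma ringKrullDim_quotient_le_one (hA : A.Finite)
    (hI : ∀ v (hv : v ≠ 0), (∀ g ∈ I, eval v g = 0) → Projectivization.mk K v hv ∈ A) :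
    ringKrullDim (MvPolynomial σ K ⧸ I) ≤ (1 : ℕ) := by
  refine ringKrullDim_quotient_le_of_forall_prime fun p _ hp => ?_
  obtain ⟨v, hv, hle⟩ := exists_lineIdeal_le hA hI hp
  exact ⟨_, hle, ringKrullDim_quotient_lineIdeal_le hv⟩

end ProjectiveZeros

section SocleSequenceOfDimension

variable {σ K : Type*} [Field K] {Ls Bs : List (MvPolynomial σ K)} {ds : List ℕ} {t : ℕ}

lemma isPositiveForm_of_forall₂ (hBs : List.Forall₂ (fun b d => 1 ≤ d ∧ b.IsHomogeneous d) Bs ds) :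
    ∀ b ∈ Bs, IsPositiveForm b := by
  induction hBs with
  | nil => simp
  | cons hb _ ih => exact List.forall_mem_cons.2 ⟨⟨_, hb.1, hb.2⟩, ih⟩

lemma IsSocleSequence.exchange_of_ringKrullDim_le (h : IsSocleSequence Ls t)
    (hLs : ∀ l ∈ Ls, l.IsHomogeneous 1)
    (hBs : List.Forall₂ (fun b d => 1 ≤ d ∧ b.IsHomogeneous d) Bs ds)
    (hlen : Ls.length = Bs.length)
    (hdim : ∀ i ≤ Bs.length, ringKrullDim
      (MvPolynomial σ K ⧸ (Ideal.ofList (Ls.drop i) ⊔ Ideal.ofList (Bs.drop (Bs.length - i)))) ≤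
        (0 : ℕ)) :
    IsSocleSequence Bs (t + (ds.map (· - 1)).sum) := by
  have hrev := IsSocleSequence.exchange_all (rs := []) (List.forall₂_reverse_iff.2 hBs) h hLs
    (by simpa using hlen) fun i hi => ?_
  · simpa [List.sum_reverse] using hrev.perm (List.reverse_perm _)
  · have hperm : (Ls.drop i ++ Bs.drop (Bs.length - i)).Perm
        ([] ++ (Bs.reverse.take i ++ Ls.drop i)) := by
      rw [List.nil_append, List.take_reverse]
      exact List.perm_append_comm.trans ((List.reverse_perm _).symm.append_right _)
    rw [← ofList_perm hperm]
    refine idealOfVars_le_radical (isHomogeneous_ofList fun b hb => ?_) ?_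
    · obtain hb | hb := List.mem_append.1 hb
      · exact ⟨1, le_rfl, hLs b (List.mem_of_mem_drop hb)⟩
      · exact isPositiveForm_of_forall₂ hBs b (List.mem_of_mem_drop hb)
    · rw [Ideal.ofList_append]
      exact hdim i (by simpa using hi)

lemma span_homogeneousSubmodule_one :
    Ideal.span (homogeneousSubmodule σ K 1 : Set (MvPolynomial σ K)) = idealOfVars σ K := by
  refine le_antisymm (Ideal.span_le.2 fun l hl => ?_) (Ideal.span_mono ?_)
  · exact mem_idealOfVars_of_isHomogeneous hl le_rfl
  · rintro _ ⟨i, rfl⟩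
    exact isHomogeneous_X _ i

lemma ringKrullDim_quotient_sup_span_linear_le (I : Ideal (MvPolynomial σ K)) :
    ringKrullDim (MvPolynomial σ K ⧸
      (I ⊔ Ideal.span (homogeneousSubmodule σ K 1 : Set (MvPolynomial σ K)))) ≤ (0 : ℕ) := by
  refine ringKrullDim_quotient_le_of_le (I := idealOfVars σ K) ?_
    (span_homogeneousSubmodule_one.ge.trans le_sup_right)
  let _ := Ideal.Quotient.field (idealOfVars σ K)
  exact (ringKrullDim_eq_zero_of_field (MvPolynomial σ K ⧸ idealOfVars σ K)).le

variable [Fintype σ]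

lemma ringKrullDim_quotient_ofList_add_length_le_card {rs : List (MvPolynomial σ K)}
    (h : IsWeaklyRegular (MvPolynomial σ K) rs) :
    ringKrullDim (MvPolynomial σ K ⧸ Ideal.ofList rs) + rs.length ≤ Fintype.card σ := by
  refine (ringKrullDim_quotient_ofList_add_length_le h).trans ?_
  rw [MvPolynomial.ringKrullDim_of_isNoetherianRing, ringKrullDim_eq_zero_of_field, zero_add,
    Nat.card_eq_fintype_card]

lemma ringKrullDim_quotient_ofList_drop_variables_le {i : ℕ} (hi : i ≤ Fintype.card σ) :
    ringKrullDim (MvPolynomial σ K ⧸ Ideal.ofList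
      ((Finset.univ.toList.map fun i => (X i : MvPolynomial σ K)).drop i)) ≤ i := by
  have h := ringKrullDim_quotient_ofList_add_length_le_card (σ := σ) (K := K)
    (rs := (Finset.univ.toList.map fun i => (X i : MvPolynomial σ K)).drop i) <| by
      rw [← List.map_drop]
      exact isWeaklyRegular_map_X (Finset.nodup_toList _).drop
  have hlen : ((Finset.univ.toList.map fun i => (X i : MvPolynomial σ K)).drop i).length =
      Fintype.card σ - i := by simp
  rw [hlen] at h
  refine (ENat.WithBot.add_le_add_natCast_right_iff (c := Fintype.card σ - i)).1 (h.trans ?_)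
  exact_mod_cast (Nat.add_sub_cancel' hi).ge

/-- The variables are exchanged for a generic sequence of linear forms. -/
lemma exists_isSocleSequence_linear [Infinite K]
    (hdim : ∀ i ≤ Fintype.card σ,
      ringKrullDim (MvPolynomial σ K ⧸ Ideal.ofList (Bs.drop i)) ≤ i) :
    ∃ Ls : List (MvPolynomial σ K), Ls.length = Fintype.card σ ∧ (∀ l ∈ Ls, l.IsHomogeneous 1) ∧
      IsSocleSequence Ls 0 ∧ ∀ i ≤ Fintype.card σ, ringKrullDim (MvPolynomial σ K ⧸
        (Ideal.ofList (Ls.drop i) ⊔ Ideal.ofList (Bs.drop (Fintype.card σ - i)))) ≤ (0 : ℕ) := by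
  set m := Fintype.card σ
  set Xs : List (MvPolynomial σ K) := Finset.univ.toList.map fun i => X i
  obtain ⟨Ls, hLlen, hLs, hLdim⟩ := exists_list_forall_ringKrullDim_le m
    (I := Sum.elim (fun i : Fin (m + 1) => Ideal.ofList (Xs.drop i))
      fun i : Fin (m + 1) => Ideal.ofList (Bs.drop i))
    (r := Sum.elim (fun i => i) fun i => i) (W := homogeneousSubmodule σ K 1) (c := 0)
    (Sum.rec (fun i => ringKrullDim_quotient_ofList_drop_variables_le (Fin.is_le i))
      fun i => hdim i (Fin.is_le i))
    fun i => ringKrullDim_quotient_sup_span_linear_le _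
  refine ⟨Ls, hLlen, hLs, ?_, fun i hi => ?_⟩
  · have h := isSocleSequence_variables.exchange_of_ringKrullDim_le (Bs := Ls)
      (ds := List.replicate m 1) ?_ ?_ ?_ fun i hi => ?_
    · simpa using h
    · simp [isHomogeneous_X]
    · exact List.forall₂_iff_get.2 ⟨by simp [hLlen], fun i hi _ => by simpa using hLs _ (by simp)⟩
    · simp [hLlen, m]
    · rw [hLlen] at hi ⊢
      simpa [Nat.sub_sub_self hi] using! hLdim (.inl ⟨i, by lia⟩) (m - i)
  · rw [sup_comm]
    simpa [Nat.sub_sub_self hi] using! hLdim (.inr ⟨m - i, by lia⟩) i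

lemma isSocleSequence_of_forall_ringKrullDim_le [Infinite K]
    (hBs : List.Forall₂ (fun b d => 1 ≤ d ∧ b.IsHomogeneous d) Bs ds)
    (hlen : Bs.length = Fintype.card σ)
    (hdim : ∀ i ≤ Fintype.card σ,
      ringKrullDim (MvPolynomial σ K ⧸ Ideal.ofList (Bs.drop i)) ≤ i) :
    IsSocleSequence Bs (ds.map (· - 1)).sum := by
  obtain ⟨Ls, hLlen, hLs, hL, hLdim⟩ := exists_isSocleSequence_linear hdim
  have hB := hL.exchange_of_ringKrullDim_le hLs hBs (hLlen.trans hlen.symm) (by rwa [hlen])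
  rwa [zero_add] at hB

end SocleSequenceOfDimension

section SingularLocus

variable {σ K : Type*} [Field K]

/-- The singular locus of the projective hypersurface `{f = 0}`. -/
def singularLocus (f : MvPolynomial σ K) : Set (Projectivization K (σ → K)) :=
  {P | eval P.rep f = 0 ∧ ∀ j, eval P.rep (pderiv j f) = 0}

lemma mk_mem_singularLocus_iff {f : MvPolynomial σ K} {n : ℕ} (hf : f.IsHomogeneous n)
    {v : σ → K} (hv : v ≠ 0) : Projectivization.mk K v hv ∈ singularLocus f ↔
      eval v f = 0 ∧ ∀ j, eval v (pderiv j f) = 0 :=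
  and_congr (eval_rep_mk_eq_zero_iff hf hv) <|
    forall_congr' fun _ => eval_rep_mk_eq_zero_iff hf.pderiv hv

lemma isHomogeneous_C_mul_X_sub (a b : K) (i j : σ) :
    (C a * X j - C b * X i : MvPolynomial σ K).IsHomogeneous 1 :=
  ((isHomogeneous_X K j).C_mul a).sub ((isHomogeneous_X K i).C_mul b)

lemma irreducible_C_mul_X_sub {a : K} (ha : a ≠ 0) (b : K) {i j : σ} (hij : i ≠ j) :
    Irreducible (C a * X j - C b * X i : MvPolynomial σ K) := by
  have hcoeff : (C a * X j - C b * X i : MvPolynomial σ K).coeff (Finsupp.single j 1) = a := by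
    classical
    have hne : Finsupp.single i 1 ≠ Finsupp.single j 1 :=
      (Finsupp.single_left_injective one_ne_zero).ne hij
    simp [coeff_X, hne]
  refine irreducible_of_totalDegree_eq_one ?_ fun x hx => ?_
  · refine (isHomogeneous_C_mul_X_sub a b i j).totalDegree fun h => ha ?_
    rw [← hcoeff, h, coeff_zero]
  · refine isUnit_of_dvd_unit (hx (Finsupp.single j 1)) ?_
    rw [hcoeff]
    exact IsUnit.mk0 a ha

/-- The ideal of a point contains two coprime linear forms. -/
lemma not_lineIdeal_le_span_singleton (hσ : 3 ≤ ENat.card σ) {v : σ → K} (hv : v ≠ 0)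
    {a : MvPolynomial σ K} (ha : ¬ IsUnit a) : ¬ lineIdeal v ≤ Ideal.span {a} := fun hle => by
  classical
  obtain ⟨i, hi⟩ := Function.ne_iff.1 hv
  obtain ⟨j, j', hj, hj', hjj'⟩ : ∃ j j', j ≠ i ∧ j' ≠ i ∧ j ≠ j' := by
    obtain ⟨j, hj, -⟩ := ENat.exists_ne_ne_of_three_le hσ i i
    obtain ⟨j', hj', hj'j⟩ := ENat.exists_ne_ne_of_three_le hσ i j
    exact ⟨j, j', hj, hj', hj'j.symm⟩
  have hdvd (m : σ) : a ∣ C (v i) * X m - C (v m) * X i :=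
    Ideal.mem_span_singleton.1 (hle ((mem_lineIdeal_iff (isHomogeneous_C_mul_X_sub _ _ _ _)).2
      (by simp [mul_comm])))
  have hassoc := ((irreducible_C_mul_X_sub hi (v j) hj.symm).dvd_iff.1 (hdvd j)).resolve_left ha
  obtain ⟨b, hb⟩ := hassoc.dvd.trans (hdvd j')
  have h := congrArg (eval (Pi.single j' 1)) hb
  exact hi (by simpa [hj'.symm, hjj'] using h)

variable [Finite σ] [IsAlgClosed K] {f : MvPolynomial σ K} {n : ℕ}

lemma not_mul_self_dvd_of_finite_singularLocus (hσ : 3 ≤ ENat.card σ) (hf : f.IsHomogeneous n)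
    (hfin : (singularLocus f).Finite) {a : MvPolynomial σ K} (ha : Prime a) : ¬ a * a ∣ f := by
  rintro ⟨c, hc⟩
  have : Nonempty σ := (ENat.card_pos_iff_nonempty σ).1 (three_pos.trans_le hσ)
  have := (Ideal.span_singleton_prime ha.ne_zero).2 ha
  obtain ⟨v, hv, hle⟩ := exists_lineIdeal_le (I := Ideal.span {a}) hfin (fun v hv h => by
    have hva : eval v a = 0 := h a (Ideal.mem_span_singleton_self a)
    rw [mk_mem_singularLocus_iff hf, hc]
    simp [hva, Derivation.leibniz]) le_rfl
  exact not_lineIdeal_le_span_singleton hσ hv ha.not_isUnit hle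

lemma ne_zero_of_finite_singularLocus (hσ : 3 ≤ ENat.card σ) (hf : f.IsHomogeneous n)
    (hfin : (singularLocus f).Finite) : f ≠ 0 := by
  obtain ⟨i⟩ : Nonempty σ := (ENat.card_pos_iff_nonempty σ).1 (three_pos.trans_le hσ)
  rintro rfl
  exact not_mul_self_dvd_of_finite_singularLocus hσ hf hfin (X_prime (i := i)) (dvd_zero _)

lemma squarefree_of_finite_singularLocus (hσ : 3 ≤ ENat.card σ) (hf : f.IsHomogeneous n)
    (hfin : (singularLocus f).Finite) : Squarefree f := by
  rw [squarefree_iff_irreducible_sq_not_dvd_of_ne_zero (ne_zero_of_finite_singularLocus hσ hf hfin)]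
  exact fun a ha => not_mul_self_dvd_of_finite_singularLocus hσ hf hfin ha.prime

end SingularLocus

section Duality

variable {σ K : Type*} [Field K] {I : Ideal (MvPolynomial σ K)} {u : MvPolynomial σ K} {e t : ℕ}

lemma mem_pow_idealOfVars_of_isHomogeneous (hu : u.IsHomogeneous e) :
    u ∈ idealOfVars σ K ^ e := by
  refine (mem_pow_idealOfVars_iff e u).2 fun m hm => ?_
  rw [Finsupp.degree_eq_weight_one]
  exact (hu (mem_support_iff.1 hm)).ge

/-- A form `v` of the largest degree with `u * v ∉ I` will do. -/
lemma exists_mul_mem_colon_notMem {E : ℕ} (hE : idealOfVars σ K ^ E ≤ I) (hu : u ∉ I) :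
    ∃ b v, v.IsHomogeneous b ∧ u * v ∉ I ∧ u * v ∈ I.colon (idealOfVars σ K) := by
  obtain ⟨b, ⟨v, hv, hvI⟩, hb⟩ : ∃ b, (∃ v, v.IsHomogeneous b ∧ u * v ∉ I) ∧
      ¬ ∃ v, v.IsHomogeneous (b + 1) ∧ u * v ∉ I := by
    by_contra! hcon
    have hall (b : ℕ) : ∃ v, v.IsHomogeneous b ∧ u * v ∉ I :=
      Nat.rec ⟨1, isHomogeneous_one _ _, by rwa [mul_one]⟩ hcon b
    obtain ⟨v, hv, hvI⟩ := hall E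
    exact hvI (I.mul_mem_left u (hE (mem_pow_idealOfVars_of_isHomogeneous hv)))
  push Not at hb
  refine ⟨b, v, hv, hvI, Submodule.mem_colon.2 ?_⟩
  suffices h : idealOfVars σ K ≤ I.colon {u * v} from fun x hx => by
    simpa [mul_comm] using Submodule.mem_colon_singleton.1 (h hx)
  refine Ideal.span_le.2 ?_
  rintro _ ⟨i, rfl⟩
  refine Submodule.mem_colon_singleton.2 ?_
  rw [smul_eq_mul, mul_comm, mul_assoc]
  exact hb _ (hv.mul (isHomogeneous_X K i))

lemma exists_eq_C_mul_of_mem_colon (hI : I.IsHomogeneous (homogeneousSubmodule σ K))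
    {s : MvPolynomial σ K} (hs : s.IsHomogeneous t)
    (hcolon : I.colon (idealOfVars σ K) = I ⊔ Ideal.span {s}) (hu : u.IsHomogeneous e)
    (huI : u ∉ I) (huc : u ∈ I.colon (idealOfVars σ K)) :
    e = t ∧ ∃ c, c ≠ 0 ∧ u - C c * s ∈ I := by
  rw [hcolon, ← Ideal.mul_top (Ideal.span {s})] at huc
  obtain ⟨w, -, hw⟩ := mem_sup_span_singleton_mul.1 huc
  have hsc : s ∈ I.colon (idealOfVars σ K) :=
    hcolon ▸ Ideal.mem_sup_right (Ideal.mem_span_singleton_self s)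
  have hws : (w - C (constantCoeff w)) * s ∈ I := by
    rw [mul_comm]
    exact Submodule.mem_colon.1 hsc _ (mem_idealOfVars_iff.2 (by simp))
  have hc : u - C (constantCoeff w) * s ∈ I := by
    convert! I.add_mem hw hws using 1
    ring
  refine ⟨by_contra fun het => huI ?_, constantCoeff w, fun h₀ => huI (by simpa [h₀] using hc), hc⟩
  have h := homogeneousComponent_mem_of_mem hI hc e
  rwa [map_sub, homogeneousComponent_eq_self hu, homogeneousComponent_C_mul,
    homogeneousComponent_of_mem hs, if_neg het, mul_zero, sub_zero] at h

lemma HasSimpleSocle.exists_linearMap (hI : I.IsHomogeneous (homogeneousSubmodule σ K))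
    (hE : ∃ E, idealOfVars σ K ^ E ≤ I) (hS : HasSimpleSocle I t) :
    ∃ τ : MvPolynomial σ K →ₗ[K] K, (∀ u ∈ I, τ u = 0) ∧ ∀ e u, u.IsHomogeneous e → u ∉ I →
      ∃ b v, e + b = t ∧ v.IsHomogeneous b ∧ τ (u * v) ≠ 0 := by
  obtain ⟨E, hE⟩ := hE
  obtain ⟨s, hs, hsI, hcolon⟩ := hS
  obtain ⟨τ, hτs, hτI⟩ := Submodule.exists_le_ker_of_notMem (p := I.restrictScalars K) hsI
  refine ⟨τ, hτI, fun e u hu huI => ?_⟩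
  obtain ⟨b, v, hv, huvI, huvc⟩ := exists_mul_mem_colon_notMem hE huI
  obtain ⟨heb, c, hc, hcs⟩ := exists_eq_C_mul_of_mem_colon hI hs hcolon (hu.mul hv) huvI huvc
  refine ⟨b, v, heb, hv, ?_⟩
  have hτ : τ (u * v - C c * s) = 0 := hτI hcs
  rw [map_sub, ← smul_eq_C_mul, map_smul, sub_eq_zero] at hτ
  rw [hτ]
  exact smul_ne_zero hc hτs

/-- Macaulay duality: a functional on the forms of degree `d` that vanishes on `I` is
`w ↦ τ (q * w)` for a form `q` and the functional `τ` of `HasSimpleSocle.exists_linearMap`. -/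
lemma HasSimpleSocle.exists_form [Finite σ] (hI : I.IsHomogeneous (homogeneousSubmodule σ K))
    (hE : ∃ E, idealOfVars σ K ^ E ≤ I) (hS : HasSimpleSocle I t) {d : ℕ}
    {φ : MvPolynomial σ K →ₗ[K] K} (hφI : ∀ w ∈ I, w.IsHomogeneous d → φ w = 0)
    (hφ : ∃ w, w.IsHomogeneous d ∧ φ w ≠ 0) :
    ∃ e q, d + e = t ∧ q.IsHomogeneous e ∧ q ∉ I ∧ ∀ a g, g.IsHomogeneous a →
      (∀ b w, a + b = d → w.IsHomogeneous b → φ (g * w) = 0) → q * g ∈ I := by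
  obtain ⟨τ, hτI, hτ⟩ := hS.exists_linearMap hI hE
  obtain ⟨w₀, hw₀, hφw₀⟩ := hφ
  obtain ⟨e, -, hde, -⟩ := hτ d w₀ hw₀ fun h => hφw₀ (hφI w₀ h hw₀)
  have : Module.Finite K (homogeneousSubmodule σ K d) :=
    Module.Finite.iff_fg.2 (homogeneousSubmodule_fg σ K d)
  obtain ⟨⟨q, hq⟩, hqφ⟩ : ∃ q : homogeneousSubmodule σ K e,
      ∀ w : homogeneousSubmodule σ K d, τ (q * w) = φ w := by
    let Φ := ((LinearMap.mul K (MvPolynomial σ K)).compr₂ τ).domRestrict₁₂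
      (homogeneousSubmodule σ K e) (homogeneousSubmodule σ K d)
    have hmem : φ.domRestrict (homogeneousSubmodule σ K d) ∈
        Submodule.span K (Set.range fun q => Φ q) := by
      refine FiniteDimensional.mem_span_of_iInf_ker_le_ker fun w hw => hφI _ ?_ w.2
      by_contra hwI
      obtain ⟨b, v, hb, hv, hne⟩ := hτ d w w.2 hwI
      obtain rfl : b = e := by lia
      refine hne (mul_comm v w.1 ▸ ?_)
      exact LinearMap.mem_ker.1 (Submodule.mem_iInf _ |>.1 hw ⟨v, hv⟩)
    obtain ⟨q, hq⟩ := Submodule.span_le (p := LinearMap.range Φ) |>.2 (fun _ h => h) hmem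
    exact ⟨q, fun w => LinearMap.congr_fun hq w⟩
  refine ⟨e, q, hde, hq, fun hqI => hφw₀ ?_, fun a g hg hgφ => by_contra fun hqg => ?_⟩
  · exact (hqφ ⟨w₀, hw₀⟩).symm.trans (hτI _ (I.mul_mem_right _ hqI))
  · obtain ⟨b, v, hb, hv, hne⟩ := hτ _ _ (hq.mul hg) hqg
    have hgv : (g * v).IsHomogeneous d := (show a + b = d by lia) ▸ hg.mul hv
    exact hne (by rw [mul_assoc, hqφ ⟨_, hgv⟩, hgφ b v (by lia) hv])

end Duality

section Gradient

variable {σ K : Type*} [Field K]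

/-- The vector of partial derivatives at `v`, as a linear function of the polynomial. -/
def gradientAt (v : σ → K) : MvPolynomial σ K →ₗ[K] σ → K :=
  LinearMap.pi fun j => (aeval v).toLinearMap ∘ₗ (pderiv j).toLinearMap

lemma gradientAt_apply (v : σ → K) (g : MvPolynomial σ K) (j : σ) :
    gradientAt v g j = eval v (pderiv j g) := rfl

lemma gradientAt_mul (v : σ → K) (g g' : MvPolynomial σ K) :
    gradientAt v (g * g') = eval v g • gradientAt v g' + eval v g' • gradientAt v g := by
  ext j
  simp [gradientAt_apply, Derivation.leibniz]

lemma eval_eq_zero_of_mem_span {s : Set (MvPolynomial σ K)} {v : σ → K}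
    (hs : ∀ g ∈ s, eval v g = 0) {u : MvPolynomial σ K} (hu : u ∈ Ideal.span s) : eval v u = 0 :=
  Ideal.span_le (I := RingHom.ker (eval v)) |>.2 hs hu

lemma gradientAt_mem_span {s : Set (MvPolynomial σ K)} {v : σ → K} (hs : ∀ g ∈ s, eval v g = 0)
    {u : MvPolynomial σ K} (hu : u ∈ Ideal.span s) :
    gradientAt v u ∈ Submodule.span K (gradientAt v '' s) := by
  induction hu using Submodule.span_induction with
  | mem g hg => exact Submodule.subset_span ⟨g, hg, rfl⟩
  | zero => simp
  | add g g' _ _ hg hg' => simpa using add_mem hg hg'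
  | smul a g hmem hg =>
    rw [smul_eq_mul, gradientAt_mul, eval_eq_zero_of_mem_span hs hmem, zero_smul, add_zero]
    exact Submodule.smul_mem _ _ hg

variable [Fintype σ]

lemma gradientAt_linearCombination_X (v c : σ → K) :
    gradientAt v (Fintype.linearCombination K X c) = c := by
  classical
  ext j
  simp [gradientAt_apply, Fintype.linearCombination_apply, Pi.single_apply, pderiv_X]

lemma eval_linearCombination_X (v c : σ → K) :
    eval v (Fintype.linearCombination K X c) = c ⬝ᵥ v := by
  simp [Fintype.linearCombination_apply, dotProduct]

lemma isHomogeneous_linearCombination_X (c : σ → K) :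
    (Fintype.linearCombination K (X : σ → MvPolynomial σ K) c).IsHomogeneous 1 :=
  sum_mem fun j _ => (homogeneousSubmodule σ K 1).smul_mem (c j) (isHomogeneous_X K j)

/-- The linear forms vanishing at `v` have more independent gradients than `ι` has elements. -/
lemma exists_linear_gradientAt_notMem {ι : Type*} [Fintype ι]
    (hcard : Fintype.card ι + 2 ≤ Fintype.card σ) (v : σ → K) (b : ι → σ → K) :
    ∃ z : MvPolynomial σ K, z.IsHomogeneous 1 ∧ eval v z = 0 ∧
      gradientAt v z ∉ Submodule.span K (Set.range b) := by
  by_contra! hcon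
  have hle : LinearMap.ker (dotProductBilin K K v) ≤ Submodule.span K (Set.range b) := by
    intro c hc
    have h := hcon _ (isHomogeneous_linearCombination_X c)
      ((eval_linearCombination_X v c).trans ((dotProduct_comm c v).trans hc))
    rwa [gradientAt_linearCombination_X] at h
  have hspan := (Submodule.finrank_mono hle).trans (finrank_range_le_card (R := K) b)
  have hker := LinearMap.finrank_range_add_finrank_ker (dotProductBilin K K v)
  have hrange := Submodule.finrank_le (LinearMap.range (dotProductBilin K K v))
  rw [Module.finrank_self] at hrange
  rw [Module.finrank_fintype_fun_eq_card] at hker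
  lia

end Gradient

section Residual

variable {σ K ι : Type*} [Field K] {f q g s y : MvPolynomial σ K} {h : ι → MvPolynomial σ K}
  {i : ι} {v : σ → K} {e k : ℕ}

lemma mem_span_insert_range_iff {u : MvPolynomial σ K} :
    u ∈ Ideal.span (insert f (Set.range h)) ↔
      ∃ w, u - w * h i ∈ Ideal.span (insert f (h '' {i}ᶜ)) := by
  have hrange : insert f (Set.range h) = insert (h i) (insert f (h '' {i}ᶜ)) := by
    have huniv : insert i {i}ᶜ = Set.univ := by rw [Set.insert_eq, Set.union_compl_self]
    rw [Set.insert_comm, ← Set.image_insert_eq, huniv, Set.image_univ]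
  rw [hrange, Ideal.mem_span_insert]
  exact exists_congr fun w =>
    ⟨fun ⟨z, hz, hu⟩ => by simpa [hu], fun hz => ⟨_, hz, by ring⟩⟩

lemma eval_eq_zero_of_sub_mul_mem [Fintype σ] [Fintype ι]
    (hcard : Fintype.card ι + 2 ≤ Fintype.card σ)
    (hf : eval v f = 0) (hdf : gradientAt v f = 0) (hh : ∀ j, eval v (h j) = 0)
    (hreg : IsSMulRegular (MvPolynomial σ K ⧸ Ideal.span (insert f (h '' {i}ᶜ))) (h i))
    (hs : eval v s ≠ 0)
    (hqs : ∀ z : MvPolynomial σ K, z.IsHomogeneous 1 → eval v z = 0 →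
      q * (s * z) ∈ Ideal.span (insert f (Set.range h)))
    (hg : eval v g = 0) (hqg : q * g - y * h i ∈ Ideal.span (insert f (h '' {i}ᶜ))) :
    eval v y = 0 := by
  classical
  by_contra hy
  obtain ⟨z, hz, hvz, hz_notMem⟩ := exists_linear_gradientAt_notMem hcard v
    (Function.update (fun j => gradientAt v (h j)) i (gradientAt v g))
  obtain ⟨w, hw⟩ := mem_span_insert_range_iff.1 (hqs z hz hvz)
  have hmem : s * y * z - w * g ∈ Ideal.span (insert f (h '' {i}ᶜ)) := by
    refine isSMulRegular_quotient_iff.1 hreg _ ?_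
    convert! Ideal.sub_mem _ (Ideal.mul_mem_left _ g hw) (Ideal.mul_mem_left _ (s * z) hqg) using 1
    ring
  have hvan : ∀ u ∈ insert f (h '' {i}ᶜ), eval v u = 0 := by
    rintro _ (rfl | ⟨j, -, rfl⟩)
    exacts [hf, hh j]
  have hgrad := gradientAt_mem_span hvan hmem
  rw [map_sub, gradientAt_mul, gradientAt_mul v w, hvz, hg, zero_smul, zero_smul, add_zero,
    add_zero, map_mul, Set.image_insert_eq, hdf, Submodule.span_insert_zero] at hgrad
  have hle : Submodule.span K (gradientAt v '' (h '' {i}ᶜ)) ≤ Submodule.span K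
      (Set.range (Function.update (fun j => gradientAt v (h j)) i (gradientAt v g))) := by
    refine Submodule.span_mono ?_
    rintro _ ⟨_, ⟨j, hj, rfl⟩, rfl⟩
    exact ⟨j, Function.update_of_ne hj _ _⟩
  have hg_mem : gradientAt v g ∈ Submodule.span K
      (Set.range (Function.update (fun j => gradientAt v (h j)) i (gradientAt v g))) :=
    Submodule.subset_span ⟨i, Function.update_self i _ _⟩
  refine hz_notMem ((Submodule.smul_mem_iff _ (mul_ne_zero hs hy)).1 ?_)
  exact (Submodule.sub_mem_iff_left _ (Submodule.smul_mem _ _ hg_mem)).1 (hle hgrad)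

lemma exists_dvd_sub_sum [Fintype ι] {n b : ℕ} (hf : f.IsHomogeneous n)
    (hh : ∀ i, (h i).IsHomogeneous k) {u : MvPolynomial σ K} (hu : u.IsHomogeneous b)
    (hmem : u ∈ Ideal.span (insert f (Set.range h))) :
    ∃ x : ι → MvPolynomial σ K, (∀ i, x i = 0 ∨ ∃ a, a + k = b ∧ (x i).IsHomogeneous a) ∧
      f ∣ u - ∑ i, x i * h i := by
  obtain ⟨w, r, hr, rfl⟩ := Ideal.mem_span_insert.1 hmem
  obtain ⟨c, rfl⟩ := (Submodule.mem_span_range_iff_exists_fun _).1 hr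
  have hcomp (i : ι) : ∃ y, (y = 0 ∨ ∃ a, a + k = b ∧ y.IsHomogeneous a) ∧
      homogeneousComponent b (h i * c i) = y * h i := by
    rcases lt_or_ge b k with hbk | hkb
    · exact ⟨0, .inl rfl, by rw [homogeneousComponent_mul_of_lt (hh i) hbk, zero_mul]⟩
    · obtain ⟨a, rfl⟩ := Nat.exists_eq_add_of_le hkb
      exact ⟨_, .inr ⟨a, add_comm a k, homogeneousComponent_isHomogeneous a (c i)⟩,
        by rw [homogeneousComponent_add_mul a (hh i), mul_comm]⟩
  choose x hx hxc using hcomp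
  refine ⟨x, hx, ?_⟩
  have hfI : (Ideal.span {f}).IsHomogeneous (homogeneousSubmodule σ K) :=
    Ideal.homogeneous_span _ _ (by rintro _ rfl; exact ⟨n, hf⟩)
  have hdvd := homogeneousComponent_mem_of_mem hfI (Ideal.mul_mem_left _ w
    (Ideal.mem_span_singleton_self f)) b
  rw [← homogeneousComponent_eq_self hu, ← Ideal.mem_span_singleton, map_add, map_sum]
  simpa only [smul_eq_mul, mul_comm (c _), hxc, add_sub_cancel_right] using hdvd

/-- The quotients `x i` of `q * g` by the forms `h i` modulo `f` satisfy the same hypotheses as `g`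
in smaller degree, so `f` divides `q * (q * g)` by induction. -/
lemma dvd_mul_of_forall_mul_mem_span [Finite ι] {n : ℕ} (hf : f.IsHomogeneous n)
    (hrad : IsRadical f) (hh : ∀ i, (h i).IsHomogeneous k) (hq : q.IsHomogeneous e) (hek : e < k)
    {A : Set (σ → K)}
    (hqA : ∀ a g, g.IsHomogeneous a → a ≤ k → (∀ v ∈ A, eval v g = 0) →
      q * g ∈ Ideal.span (insert f (Set.range h)))
    (hloc : ∀ i g y, (∀ v ∈ A, eval v g = 0) →
      q * g - y * h i ∈ Ideal.span (insert f (h '' {i}ᶜ)) → ∀ v ∈ A, eval v y = 0)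
    {a : ℕ} (hg : g.IsHomogeneous a) (hak : a ≤ k) (hgA : ∀ v ∈ A, eval v g = 0) : f ∣ q * g := by
  classical
  cases nonempty_fintype ι
  induction a using Nat.strong_induction_on generalizing g with
  | _ a ih =>
  obtain ⟨x, hx, hdvd⟩ := exists_dvd_sub_sum hf hh (hq.mul hg) (hqA a g hg hak hgA)
  have hxA (i : ι) : ∀ v ∈ A, eval v (x i) = 0 := by
    refine hloc i g (x i) hgA ?_
    have hsum : ∑ j ∈ {i}ᶜ, x j * h j ∈ Ideal.span (insert f (h '' {i}ᶜ)) :=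
      Ideal.sum_mem _ fun j hj => Ideal.mul_mem_left _ _ <| Ideal.subset_span <| .inr
        ⟨j, by simpa using hj, rfl⟩
    convert! Ideal.add_mem _ (Ideal.mem_of_dvd _ hdvd (Ideal.subset_span (.inl rfl))) hsum using 1
    rw [Fintype.sum_eq_add_sum_compl i]
    ring
  have hqx (i : ι) : f ∣ q * x i := by
    rcases hx i with hx | ⟨b, hb, hx⟩
    · simp [hx]
    · exact ih b (by lia) hx (by lia) (hxA i)
  have hqqg : f ∣ q * (q * g) := by
    have hsum : f ∣ ∑ i, q * x i * h i := Finset.dvd_sum fun i _ => (hqx i).mul_right _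
    convert! (hdvd.mul_left q).add hsum using 1
    simp only [mul_sub, Finset.mul_sum, mul_assoc, sub_add_cancel]
  exact hrad 2 _ (by convert! hqqg.mul_left g using 1; ring)

lemma mem_span_of_forall_mul_mem_span [Fintype σ] [Fintype ι] [Nonempty ι] {n : ℕ}
    (hcard : Fintype.card ι + 2 ≤ Fintype.card σ) (hf : f.IsHomogeneous n)
    (hrad : IsRadical f) (hh : ∀ i, (h i).IsHomogeneous k)
    (hreg : ∀ i, IsSMulRegular (MvPolynomial σ K ⧸ Ideal.span (insert f (h '' {i}ᶜ))) (h i))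
    {A : Set (σ → K)} (hfA : ∀ v ∈ A, eval v f = 0 ∧ gradientAt v f = 0)
    (hhA : ∀ v ∈ A, ∀ i, eval v (h i) = 0) (hq : q.IsHomogeneous e) (hek : e < k)
    (hqA : ∀ a g, g.IsHomogeneous a → a ≤ k → (∀ v ∈ A, eval v g = 0) →
      q * g ∈ Ideal.span (insert f (Set.range h)))
    (hqs : ∀ v ∈ A, ∃ s, eval v s ≠ 0 ∧ ∀ z : MvPolynomial σ K, z.IsHomogeneous 1 →
      eval v z = 0 → q * (s * z) ∈ Ideal.span (insert f (Set.range h))) :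
    q ∈ Ideal.span (insert f (Set.range h)) := by
  inhabit ι
  have hloc (i : ι) (g y : MvPolynomial σ K) (hgA : ∀ v ∈ A, eval v g = 0)
      (hqg : q * g - y * h i ∈ Ideal.span (insert f (h '' {i}ᶜ))) (v : σ → K) (hv : v ∈ A) :
      eval v y = 0 := by
    obtain ⟨s, hs, hqs⟩ := hqs v hv
    exact eval_eq_zero_of_sub_mul_mem hcard (hfA v hv).1 (hfA v hv).2 (hhA v hv) (hreg i) hs hqs
      (hgA v hv) hqg
  have hdvd : f ∣ q * h default := dvd_mul_of_forall_mul_mem_span hf hrad hh hq hek hqA hloc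
    (hh default) le_rfl fun v hv => hhA v hv default
  have hmem : h default * q ∈ Ideal.span (insert f (h '' {default}ᶜ)) :=
    Ideal.mem_of_dvd _ (mul_comm q _ ▸ hdvd) (Ideal.subset_span (Set.mem_insert f _))
  exact Ideal.span_mono (Set.insert_subset_insert (Set.image_subset_range h _))
    (isSMulRegular_quotient_iff.1 (hreg default) _ hmem)

end Residual

section Points

variable {σ K α : Type*} [Field K] {x : α → σ → K} {l : MvPolynomial σ K} {d : ℕ}

lemma exists_isHomogeneous_separating [Fintype α] (hx : x.Injective) (hl : l.IsHomogeneous 1)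
    (hlx : ∀ a, eval (x a) l = 1) {m : ℕ} (hm : Fintype.card α ≤ m + 1) (a : α) :
    ∃ s : MvPolynomial σ K, s.IsHomogeneous m ∧ eval (x a) s ≠ 0 ∧
      ∀ b, b ≠ a → eval (x b) s = 0 := by
  classical
  have hsep (b : α) : ∃ s : MvPolynomial σ K, s.IsHomogeneous 1 ∧ eval (x a) s ≠ 0 ∧
      (b ≠ a → eval (x b) s = 0) := by
    obtain rfl | hba := eq_or_ne b a
    · exact ⟨l, hl, by simp [hlx], fun h => absurd rfl h⟩
    · obtain ⟨i, hi⟩ := Function.ne_iff.1 (hx.ne hba)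
      exact ⟨X i - C (x b i) * l, (isHomogeneous_X K i).sub (hl.C_mul _),
        by simpa [hlx, sub_eq_zero] using hi.symm, by simp [hlx]⟩
  choose s hs hsa hsb using hsep
  refine ⟨l ^ (m + 1 - Fintype.card α) * ∏ b ∈ Finset.univ.erase a, s b, ?_, ?_, fun b hb => ?_⟩
  · have hprod := IsHomogeneous.prod (Finset.univ.erase a) s (fun _ => 1) fun b _ => hs b
    convert! (hl.pow (m + 1 - Fintype.card α)).mul hprod using 1
    have hpos := Fintype.card_pos_iff.2 ⟨a⟩
    simp
    lia
  · simp [hlx, map_prod, Finset.prod_ne_zero_iff, hsa]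
  · rw [map_mul, map_prod,
      Finset.prod_eq_zero (Finset.mem_erase.2 ⟨hb, Finset.mem_univ b⟩) (hsb b hb), mul_zero]

/-- Evaluation at `v` of the forms of degree `d`. -/
def homogeneousEval (d : ℕ) (v : σ → K) : homogeneousSubmodule σ K d →ₗ[K] K :=
  (aeval v).toLinearMap ∘ₗ (homogeneousSubmodule σ K d).subtype

lemma homogeneousEval_apply (v : σ → K) (w : homogeneousSubmodule σ K d) :
    homogeneousEval d v w = eval v w.1 := rfl

lemma exists_eval_ne_zero_of_linearIndependent [Finite α]
    (h : LinearIndependent K fun a => homogeneousEval d (x a)) (a : α) :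
    ∃ F : MvPolynomial σ K, F.IsHomogeneous d ∧ (∀ b, b ≠ a → eval (x b) F = 0) ∧
      eval (x a) F ≠ 0 := by
  by_contra! hcon
  have hmem : homogeneousEval d (x a) ∈
      Submodule.span K (Set.range fun b : {b // b ≠ a} => homogeneousEval d (x b)) :=
    mem_span_of_iInf_ker_le_ker fun w hw => hcon w w.2 fun b hb =>
      Submodule.mem_iInf _ |>.1 hw ⟨b, hb⟩
  refine h.notMem_span_image (s := {a}ᶜ) (x := a) (by simp) ?_
  rwa [Set.image_eq_range]

/-- A linear relation between the evaluations in degree `d` is a functional in degree `d + N` that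
vanishes on the multiples of `l ^ N`; Macaulay duality turns it into the form `q`. -/
lemma HasSimpleSocle.exists_form_of_sum_eval_eq_zero [Finite σ] [Fintype α]
    {I : Ideal (MvPolynomial σ K)} {N t : ℕ} (hI : I.IsHomogeneous (homogeneousSubmodule σ K))
    (hIx : ∀ u ∈ I, ∀ a, eval (x a) u = 0) (hx : x.Injective) (hl : l.IsHomogeneous 1)
    (hlx : ∀ a, eval (x a) l = 1) (hE : ∃ E, idealOfVars σ K ^ E ≤ I ⊔ Ideal.span {l ^ N})
    (hS : HasSimpleSocle (I ⊔ Ideal.span {l ^ N}) t) {c : α → K} {a : α} (hca : c a ≠ 0)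
    (hc : ∑ b, c b • homogeneousEval d (x b) = 0) (hN : Fintype.card α ≤ d + N + 1) :
    ∃ e q, d + N + e = t ∧ q.IsHomogeneous e ∧ q ∉ I ∧ ∀ b g, g.IsHomogeneous b → e + b < N →
      (∀ a, eval (x a) g = 0) → q * g ∈ I := by
  have hlN : (l ^ N).IsHomogeneous N := by simpa using hl.pow N
  have hsup : (I ⊔ Ideal.span {l ^ N}).IsHomogeneous (homogeneousSubmodule σ K) :=
    hI.sup (Ideal.homogeneous_span _ _ (by rintro _ rfl; exact ⟨N, hlN⟩))
  have hmem {w : MvPolynomial σ K} (hw : w ∈ I ⊔ Ideal.span {l ^ N}) : ∃ u, w - l ^ N * u ∈ I := by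
    rw [← Ideal.mul_top (Ideal.span {l ^ N}), mem_sup_span_singleton_mul] at hw
    exact hw.imp fun _ h => h.2
  let φ : MvPolynomial σ K →ₗ[K] K := ∑ b, c b • (aeval (x b)).toLinearMap
  have hφ (w : MvPolynomial σ K) : φ w = ∑ b, c b * eval (x b) w := by
    simp [φ, aeval_eq_eval]
  have hφI : ∀ w ∈ I ⊔ Ideal.span {l ^ N}, w.IsHomogeneous (d + N) → φ w = 0 := fun w hwI hw => by
    obtain ⟨u, hu⟩ := hmem hwI
    have hu' := homogeneousComponent_mem_of_mem hI hu (N + d)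
    rw [map_sub, homogeneousComponent_add_mul d hlN,
      homogeneousComponent_eq_self (add_comm d N ▸ hw)] at hu'
    have hwu (b : α) : eval (x b) w = eval (x b) (homogeneousComponent d u) := by
      simpa [hlx, sub_eq_zero] using hIx _ hu' b
    simp_rw [hφ, hwu]
    simpa [homogeneousEval_apply] using
      LinearMap.congr_fun hc ⟨_, homogeneousComponent_isHomogeneous d u⟩
  obtain ⟨s, hs, hsa, hsb⟩ := exists_isHomogeneous_separating hx hl hlx hN a
  have hφs : φ s ≠ 0 := by
    rw [hφ, Fintype.sum_eq_single a fun b hb => by rw [hsb b hb, mul_zero]]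
    exact mul_ne_zero hca hsa
  obtain ⟨e, q, he, hq, hqI, hqg⟩ := hS.exists_form hsup hE hφI ⟨s, hs, hφs⟩
  refine ⟨e, q, he, hq, fun h => hqI (Ideal.mem_sup_left h), fun b g hg hb hgx => ?_⟩
  obtain ⟨u, hu⟩ := hmem (hqg b g hg fun _ w _ _ => by simp [hφ, hgx])
  have hu' := homogeneousComponent_mem_of_mem hI hu (e + b)
  rwa [map_sub, homogeneousComponent_mul_of_lt hlN hb, sub_zero,
    homogeneousComponent_eq_self (hq.mul hg)] at hu'

end Points

section Independence

variable {σ K α : Type*} [Field K] {f l : MvPolynomial σ K} {hs : List (MvPolynomial σ K)}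

lemma ofList_cons_eq_span_insert_range_get {R : Type*} [CommRing R] (a : R) (rs : List R) :
    Ideal.ofList (a :: rs) = Ideal.span (insert a (Set.range rs.get)) := by
  rw [Set.range_list_get]
  exact congrArg Ideal.span (Set.ext fun _ => by simp)

lemma isSMulRegular_get_of_isWeaklyRegular_cons
    (hreg : IsWeaklyRegular (MvPolynomial σ K) (f :: hs))
    (hpos : ∀ r ∈ f :: hs, IsPositiveForm r) (i : Fin hs.length) :
    IsSMulRegular (MvPolynomial σ K ⧸ Ideal.span (insert f (hs.get '' {i}ᶜ))) (hs.get i) := by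
  have hperm : (f :: hs).Perm (f :: hs.eraseIdx i ++ [hs.get i]) :=
    ((List.getElem_cons_eraseIdx_perm i.2).symm.trans (List.perm_append_singleton _ _).symm).cons f
  have h := (isWeaklyRegular_append_singleton_iff.1
    (isWeaklyRegular_of_perm_of_isPositiveForm hreg hpos hperm)).2
  have hideal : Ideal.ofList (f :: hs.eraseIdx i) = Ideal.span (insert f (hs.get '' {i}ᶜ)) := by
    refine congrArg Ideal.span (Set.ext fun r => ?_)
    simp [List.mem_eraseIdx_iff_getElem, Fin.exists_iff, Fin.ext_iff]
  rwa [hideal] at h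

lemma exists_pow_idealOfVars_le_ofList_append_pow [Finite σ] {rs : List (MvPolynomial σ K)}
    (hrad : idealOfVars σ K ≤ (Ideal.ofList (rs ++ [l])).radical) (N : ℕ) :
    ∃ E, idealOfVars σ K ^ E ≤ Ideal.ofList rs ⊔ Ideal.span {l ^ N} := by
  have hle : Ideal.ofList (rs ++ [l]) ≤ (Ideal.ofList rs ⊔ Ideal.span {l ^ N}).radical := by
    rw [Ideal.ofList_append, Ideal.ofList_singleton]
    refine sup_le (le_sup_left.trans Ideal.le_radical) ?_
    rw [Ideal.span_singleton_le_iff_mem]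
    exact ⟨N, Ideal.mem_sup_right (Ideal.mem_span_singleton_self _)⟩
  exact Ideal.exists_pow_le_of_le_radical_of_fg (hrad.trans (Ideal.radical_le_radical_iff.2 hle))
    (IsNoetherian.noetherian _)

lemma linearIndependent_homogeneousEval [Fintype σ] [Finite α] {x : α → σ → K} {n k d t : ℕ}
    (hf : f.IsHomogeneous n) (hfrad : IsRadical f) (hh : ∀ g ∈ hs, g.IsHomogeneous k)
    (hl : l.IsHomogeneous 1) (hs₀ : hs ≠ []) (hlen : hs.length + 2 ≤ Fintype.card σ)
    (hsoc : IsSocleSequence (f :: hs ++ [l]) t)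
    (hrad : idealOfVars σ K ≤ (Ideal.ofList (f :: hs ++ [l])).radical) (hx : x.Injective)
    (hfx : ∀ a, eval (x a) f = 0 ∧ gradientAt (x a) f = 0) (hhx : ∀ a, ∀ g ∈ hs, eval (x a) g = 0)
    (hlx : ∀ a, eval (x a) l = 1) (ht : t ≤ d + k) :
    LinearIndependent K fun a => homogeneousEval d (x a) := by
  cases nonempty_fintype α
  have : Nonempty (Fin hs.length) := ⟨⟨0, List.length_pos_iff.2 hs₀⟩⟩
  rw [Fintype.linearIndependent_iff]
  by_contra! hcon
  obtain ⟨c, hc, a, hca⟩ := hcon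
  set N := t + k + Fintype.card α + 1
  have hpos : ∀ r ∈ f :: hs, IsPositiveForm r := fun r hr =>
    hsoc.isPositiveForm r (List.mem_append_left _ hr)
  have hlast := hsoc.exchange hl (D := N) (by lia) (by simpa using hl.pow N)
    ⟨N, Ideal.subset_span (by simp)⟩
  have hN := hlast.hasSimpleSocle
  rw [Ideal.ofList_append, Ideal.ofList_singleton] at hN
  have hvan : ∀ u ∈ Ideal.ofList (f :: hs), ∀ b, eval (x b) u = 0 := fun u hu b => by
    refine eval_eq_zero_of_mem_span (fun g hg => ?_) hu
    obtain rfl | hg := List.mem_cons.1 hg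
    exacts [(hfx b).1, hhx b g hg]
  obtain ⟨e, q, he, hq, hqI, hqg⟩ := hN.exists_form_of_sum_eval_eq_zero (isHomogeneous_ofList hpos)
    hvan hx hl hlx (exists_pow_idealOfVars_le_ofList_append_pow hrad N) hca hc (by lia)
  rw [ofList_cons_eq_span_insert_range_get] at hqI hqg
  refine hqI (mem_span_of_forall_mul_mem_span (A := Set.range x) (by simpa using hlen) hf hfrad
    (fun i => hh _ (hs.get_mem i)) (isSMulRegular_get_of_isWeaklyRegular_cons
      (isWeaklyRegular_append_singleton_iff.1 hsoc.isWeaklyRegular).1 hpos)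
    (Set.forall_mem_range.2 hfx) (Set.forall_mem_range.2 fun b i => hhx b _ (hs.get_mem i))
    hq (by lia) (fun b g hg hb hgx => hqg b g hg (by lia) (Set.forall_mem_range.1 hgx))
    (Set.forall_mem_range.2 fun b => ?_))
  obtain ⟨r, hr, hrb, hra⟩ := exists_isHomogeneous_separating hx hl hlx (Nat.le_succ _) b
  refine ⟨r, hrb, fun z hz hzb => hqg _ _ (hr.mul hz) (by lia) fun b' => ?_⟩
  obtain rfl | hbb' := eq_or_ne b' b
  · rw [map_mul, hzb, mul_zero]
  · rw [map_mul, hra b' hbb', zero_mul]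

end Independence

section GenericMembers

variable {σ K : Type*} [Field K] {f : MvPolynomial σ K} {n k s : ℕ}

lemma one_le_of_isHomogeneous_of_eval_eq_zero (hf : f.IsHomogeneous n) (hf₀ : f ≠ 0) {v : σ → K}
    (hv : eval v f = 0) : 1 ≤ n := by
  by_contra! hn
  obtain rfl : n = 0 := by lia
  have hC := totalDegree_eq_zero_iff_eq_C.1 ((totalDegree_zero_iff_isHomogeneous σ).2 hf)
  rw [hC, eval_C] at hv
  exact hf₀ (by rw [hC, hv, C_0])

lemma exists_mem_eval_ne_zero_of_idealOfVars_le_radical {A : Set (MvPolynomial σ K)}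
    (hA : idealOfVars σ K ≤ (Ideal.span A).radical) {v : σ → K} (hv : v ≠ 0) :
    ∃ g ∈ A, eval v g ≠ 0 := by
  by_contra! hvan
  refine hv (funext fun i => ?_)
  obtain ⟨N, hN⟩ := hA (Ideal.subset_span ⟨i, rfl⟩)
  exact eq_zero_of_pow_eq_zero (by simpa using eval_eq_zero_of_mem_span hvan hN)

variable [Fintype σ]

lemma ringKrullDim_quotient_span_singleton_le (hσ : s + 1 = Fintype.card σ) (hf₀ : f ≠ 0) :
    ringKrullDim (MvPolynomial σ K ⧸ Ideal.span {f}) ≤ s := by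
  have h := ringKrullDim_quotient_ofList_add_length_le_card (rs := [f])
    ((isWeaklyRegular_singleton_iff _ f).2 (IsSMulRegular.of_ne_zero hf₀))
  rw [Ideal.ofList_singleton, List.length_singleton, ← hσ, Nat.cast_add] at h
  exact ENat.WithBot.add_le_add_natCast_right_iff.1 h

variable [Infinite K] {H : Submodule K (MvPolynomial σ K)}

lemma exists_forall_ringKrullDim_drop_le (hσ : s + 2 = Fintype.card σ) (hf₀ : f ≠ 0)
    (hdim : ringKrullDim (MvPolynomial σ K ⧸ (Ideal.span {f} ⊔ Ideal.span H)) ≤ (1 : ℕ)) :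
    ∃ hs l, hs.length = s ∧ (∀ h ∈ hs, h ∈ H) ∧ l.IsHomogeneous 1 ∧ ∀ i ≤ Fintype.card σ,
      ringKrullDim (MvPolynomial σ K ⧸ Ideal.ofList ((l :: (hs ++ [f])).drop i)) ≤ i := by
  obtain ⟨hs, hlen, hhs, hhsdim⟩ := exists_list_forall_ringKrullDim_le s (ι := Unit)
    (r := fun _ => s + 1) (fun _ => ringKrullDim_quotient_span_singleton_le hσ hf₀) fun _ => hdim
  replace hhsdim (i : ℕ) (hi : i ≤ s) :
      ringKrullDim (MvPolynomial σ K ⧸ (Ideal.span {f} ⊔ Ideal.ofList (hs.drop i))) ≤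
        (i + 1 : ℕ) := (hhsdim () i).trans (Nat.cast_le.2 (by lia))
  obtain ⟨l, hl, hldim⟩ := exists_mem_forall_ringKrullDim_le (ι := Unit)
    (I := fun _ => Ideal.span {f} ⊔ Ideal.ofList hs) (r := fun _ => 0)
    (W := homogeneousSubmodule σ K 1) (fun _ => hhsdim 0 s.zero_le)
    fun _ => ringKrullDim_quotient_sup_span_linear_le _
  refine ⟨hs, l, hlen, hhs, hl, fun i hi => ?_⟩
  obtain - | i := i
  · rw [List.drop_zero, Ideal.ofList_cons, Ideal.ofList_append, Ideal.ofList_singleton,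
      sup_comm, sup_comm (Ideal.ofList hs)]
    exact hldim ()
  obtain hi | rfl : i ≤ s ∨ i = s + 1 := by lia
  · rw [List.drop_succ_cons, List.drop_append_of_le_length (by lia), Ideal.ofList_append,
      Ideal.ofList_singleton, sup_comm]
    exact hhsdim i hi
  · rw [List.drop_eq_nil_of_le (by simp [hlen]), hσ]
    simpa using ringKrullDim_quotient_ofList_add_length_le_card (σ := σ) (K := K) (.nil _ _)

lemma exists_isSocleSequence_of_ringKrullDim_le (hσ : s + 2 = Fintype.card σ)
    (hf : f.IsHomogeneous n) (hf₀ : f ≠ 0) (hn : 1 ≤ n) (hk : 1 ≤ k)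
    (hH : ∀ h ∈ H, h.IsHomogeneous k)
    (hdim : ringKrullDim (MvPolynomial σ K ⧸ (Ideal.span {f} ⊔ Ideal.span H)) ≤ (1 : ℕ)) :
    ∃ hs l, hs.length = s ∧ (∀ h ∈ hs, h ∈ H) ∧ l.IsHomogeneous 1 ∧
      IsSocleSequence (f :: hs ++ [l]) (n - 1 + s * (k - 1)) ∧
      idealOfVars σ K ≤ (Ideal.ofList (f :: hs ++ [l])).radical := by
  obtain ⟨hs, l, hlen, hhs, hl, hdrop⟩ := exists_forall_ringKrullDim_drop_le hσ hf₀ hdim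
  have hperm : (l :: (hs ++ [f])).Perm (f :: hs ++ [l]) :=
    (List.Perm.cons l (List.perm_append_singleton f hs)).trans
      (List.perm_append_singleton l (f :: hs)).symm
  have hdeg : List.Forall₂ (fun b d => 1 ≤ d ∧ b.IsHomogeneous d) (l :: (hs ++ [f]))
      (1 :: (List.replicate s k ++ [n])) :=
    .cons ⟨le_rfl, hl⟩ <| List.rel_append (List.forall₂_iff_get.2 ⟨by simp [hlen], fun i _ _ => by
      simpa using ⟨hk, hH _ (hhs _ (by simp))⟩⟩) (.cons ⟨hn, hf⟩ .nil)
  have hsoc : IsSocleSequence (f :: hs ++ [l]) (n - 1 + s * (k - 1)) := by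
    convert! (isSocleSequence_of_forall_ringKrullDim_le hdeg (by simp [hlen, hσ])
      hdrop).perm hperm using 1
    simp [add_comm]
  refine ⟨hs, l, hlen, hhs, hl, hsoc, ?_⟩
  refine idealOfVars_le_radical (isHomogeneous_ofList hsoc.isPositiveForm) ?_
  rw [← ofList_perm hperm]
  exact hdrop 0 (Nat.zero_le _)

end GenericMembers

section SingularPoints

variable {σ K : Type*} [Field K] {f l : MvPolynomial σ K} {n k d t : ℕ}

lemma homogeneousEval_smul (c : K) (v : σ → K) :
    homogeneousEval d (c • v) = c ^ d • homogeneousEval d v :=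
  LinearMap.ext fun g => eval_smul_of_isHomogeneous g.2 c v

lemma linearIndependent_homogeneousEval_smul_iff {α : Type*} {c : α → K} (hc : ∀ a, c a ≠ 0)
    (x : α → σ → K) : LinearIndependent K (fun a => homogeneousEval d (c a • x a)) ↔
      LinearIndependent K fun a => homogeneousEval d (x a) := by
  simp_rw [homogeneousEval_smul]
  exact LinearIndependent.units_smul_iff _ fun a => Units.mk0 (c a) (hc a) ^ d

lemma ringKrullDim_quotient_baseLocus_le_one [IsAlgClosed K] [Finite σ] [Nonempty σ]
    (hf : f.IsHomogeneous n)
    {H : Submodule K (MvPolynomial σ K)} (hH : ∀ h ∈ H, h.IsHomogeneous k)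
    (hbase : {P : Projectivization K (σ → K) |
      eval P.rep f = 0 ∧ ∀ h ∈ H, eval P.rep h = 0}.Finite) :
    ringKrullDim (MvPolynomial σ K ⧸ (Ideal.span {f} ⊔ Ideal.span H)) ≤ (1 : ℕ) :=
  ringKrullDim_quotient_le_one hbase fun _ hv hvan =>
    ⟨(eval_rep_mk_eq_zero_iff hf hv).2 <|
        hvan f (Ideal.mem_sup_left (Ideal.mem_span_singleton_self f)),
      fun h hh => (eval_rep_mk_eq_zero_iff (hH h hh) hv).2 <|
        hvan h (Ideal.mem_sup_right (Ideal.subset_span hh))⟩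

lemma injective_inv_eval_smul_rep {A : Set (Projectivization K (σ → K))}
    (hlA : ∀ P : A, eval P.1.rep l ≠ 0) :
    (fun P : A => (eval P.1.rep l)⁻¹ • P.1.rep).Injective := by
  intro P Q (hPQ : (eval P.1.rep l)⁻¹ • P.1.rep = (eval Q.1.rep l)⁻¹ • Q.1.rep)
  rw [Subtype.ext_iff, ← P.1.mk_rep, ← Q.1.mk_rep, Projectivization.mk_eq_mk_iff']
  refine ⟨eval P.1.rep l * (eval Q.1.rep l)⁻¹, ?_⟩
  rw [mul_smul, ← hPQ, smul_inv_smul₀ (hlA P)]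

lemma linearIndependent_homogeneousEval_singularLocus [Fintype σ]
    {hs : List (MvPolynomial σ K)} (hf : f.IsHomogeneous n) (hfrad : IsRadical f)
    (hfin : (singularLocus f).Finite) (hh : ∀ g ∈ hs, g.IsHomogeneous k) (hl : l.IsHomogeneous 1)
    (hs₀ : hs ≠ []) (hlen : hs.length + 2 ≤ Fintype.card σ)
    (hsoc : IsSocleSequence (f :: hs ++ [l]) t)
    (hrad : idealOfVars σ K ≤ (Ideal.ofList (f :: hs ++ [l])).radical)
    (hhvan : ∀ g ∈ hs, ∀ P ∈ singularLocus f, eval P.rep g = 0) (ht : t ≤ d + k) :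
    LinearIndependent K fun P : singularLocus f => homogeneousEval d P.1.rep := by
  have : Finite (singularLocus f) := hfin.to_subtype
  have hlP (P : singularLocus f) : eval P.1.rep l ≠ 0 := by
    obtain ⟨g, hg, hgP⟩ := exists_mem_eval_ne_zero_of_idealOfVars_le_radical hrad P.1.rep_nonzero
    obtain rfl | hg | rfl : g = f ∨ g ∈ hs ∨ g = l := by simpa using hg
    exacts [absurd P.2.1 hgP, absurd (hhvan g hg P.1 P.2) hgP, hgP]
  let x (P : singularLocus f) : σ → K := (eval P.1.rep l)⁻¹ • P.1.rep
  have hxvan {g : MvPolynomial σ K} {e : ℕ} (hg : g.IsHomogeneous e) (P : singularLocus f)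
      (hgP : eval P.1.rep g = 0) : eval (x P) g = 0 := by
    rw [eval_smul_of_isHomogeneous hg, hgP, mul_zero]
  have hgrad (P : singularLocus f) : gradientAt (x P) f = 0 := by
    ext j
    rw [gradientAt_apply]
    exact hxvan hf.pderiv P (P.2.2 j)
  refine (linearIndependent_homogeneousEval_smul_iff (fun P => inv_ne_zero (hlP P)) _).1 ?_
  exact linearIndependent_homogeneousEval hf hfrad hh hl hs₀ hlen hsoc hrad
    (injective_inv_eval_smul_rep hlP)
    (fun P => ⟨hxvan hf P P.2.1, hgrad P⟩)
    (fun P g hg => hxvan (hh g hg) P (hhvan g hg P.1 P.2))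
    (fun P => by rw [eval_smul_of_isHomogeneous hl, pow_one, inv_mul_cancel₀ (hlP P)]) ht

end SingularPoints

theorem stmt_4_general {K : Type*} [Field K] [IsAlgClosed K] {N : ℕ} (hN : 2 ≤ N) {n k d : ℕ}
    {f : MvPolynomial (Fin (N + 1)) K} (hf : f.IsHomogeneous n) (hk : 1 ≤ k)
    (hfin : (singularLocus f).Finite) {H : Submodule K (MvPolynomial (Fin (N + 1)) K)}
    (hH : ∀ h ∈ H, h.IsHomogeneous k) (hHvan : ∀ h ∈ H, ∀ P ∈ singularLocus f, eval P.rep h = 0)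
    (hbase : {P : Projectivization K (Fin (N + 1) → K) |
      eval P.rep f = 0 ∧ ∀ h ∈ H, eval P.rep h = 0}.Finite)
    (hd : n + (N - 2) * k ≤ d + N) :
    ∀ P ∈ singularLocus f, ∃ F : MvPolynomial (Fin (N + 1)) K, F.IsHomogeneous d ∧
      (∀ Q ∈ singularLocus f, Q ≠ P → eval Q.rep F = 0) ∧ eval P.rep F ≠ 0 := by
  intro P hP
  have hcard : 3 ≤ ENat.card (Fin (N + 1)) := by
    rw [ENat.card_eq_coe_fintype_card, Fintype.card_fin]
    exact_mod_cast Nat.succ_le_succ hN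
  have hf₀ : f ≠ 0 := ne_zero_of_finite_singularLocus hcard hf hfin
  have hfrad : IsRadical f := (squarefree_of_finite_singularLocus hcard hf hfin).isRadical
  have hn : 1 ≤ n := one_le_of_isHomogeneous_of_eval_eq_zero hf hf₀ hP.1
  obtain ⟨hs, l, hlen, hhs, hl, hsoc, hrad⟩ := exists_isSocleSequence_of_ringKrullDim_le
    (s := N - 1) (by rw [Fintype.card_fin]; lia) hf hf₀ hn hk hH
    (ringKrullDim_quotient_baseLocus_le_one hf hH hbase)
  have ht : n - 1 + (N - 1) * (k - 1) ≤ d + k := by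
    obtain ⟨N, rfl⟩ := Nat.exists_eq_add_of_le' hN
    obtain ⟨k, rfl⟩ := Nat.exists_eq_add_of_le' hk
    simp only [Nat.add_sub_cancel] at hd ⊢
    lia
  have hind := linearIndependent_homogeneousEval_singularLocus hf hfrad hfin
    (fun h hh => hH h (hhs h hh)) hl (List.ne_nil_of_length_pos (by lia))
    (by rw [hlen, Fintype.card_fin]; lia) hsoc hrad (fun h hh => hHvan h (hhs h hh)) ht
  have : Finite (singularLocus f) := hfin.to_subtype
  obtain ⟨F, hF, hFvan, hFP⟩ := exists_eval_ne_zero_of_linearIndependent hind ⟨P, hP⟩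
  exact ⟨F, hF, fun Q hQ hQP => hFvan ⟨Q, hQ⟩ (by simpa using hQP), hFP⟩

theorem stmt_4 (n k : ℕ) (f : MvPolynomial (Fin 5) ℂ) (hf : f.IsHomogeneous n)
    (hk : 1 ≤ k) (hkn : 2 * k < n)
    (hSingFin : (SingHyp f).Finite)
    (hnodal : ∀ p ∈ SingHyp f, (HessianAt f p.rep).rank = 4)
    (H : Submodule ℂ (MvPolynomial (Fin 5) ℂ)) (hHne : H ≠ ⊥)
    (hHhom : ∀ h ∈ H, h.IsHomogeneous k)
    (hHvan : ∀ h ∈ H, ∀ p ∈ SingHyp f, VanishesAt h p)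
    (hbase : {p : ProjPt 4 | eval p.rep f = 0 ∧ ∀ h ∈ H, VanishesAt h p}.Finite) :
    ∀ P ∈ SingHyp f, ∃ F : MvPolynomial (Fin 5) ℂ,
      F.IsHomogeneous (2 * n - 5) ∧
      (∀ Q ∈ SingHyp f, Q ≠ P → VanishesAt F Q) ∧ ¬ VanishesAt F P :=
  stmt_4_general (N := 4) (by norm_num) hf hk hSingFin hHhom hHvan hbase (by lia)
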